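/- (Variational principle) Let Σ be a topologically mixing countable Markov shift and {log f_n} an almost-additive Bowen sequence with sup f_1 < ∞. Then P(F) = sup { h(μ) + lim_{n→∞} (1/n) ∫ log f_n dμ : μ ∈ M, lim_{n→∞} (1/n) ∫ log f_n dμ ≠ −∞ }, where M is the set of σ-invariant Borel probability measures and h(μ) is the Kolmogorov–Sinai entropy. -/

import Mathlib

open scoped ENNReal
open Filter MeasureTheory

noncomputable section

/-- The one-sided shift map on sequences. -/
def shf {S : Type*} : (ℕ → S) → (ℕ → S) := fun x i => x (i + 1)

/-- The countable Markov shift determined by the transition relation `T`. -/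
def shiftSpace {S : Type*} (T : S → S → Prop) : Set (ℕ → S) :=
  {x | ∀ i, T (x i) (x (i + 1))}


/-- The partition function `Z_n(F,a)`. -/
def ZFun {S : Type*} (T : S → S → Prop) (f : ℕ → (ℕ → S) → ℝ) (n : ℕ) (a : S) : ℝ≥0∞ :=
  ∑' x : {x : ℕ → S // x ∈ shiftSpace T ∧ shf^[n] x = x ∧ x 0 = a}, ENNReal.ofReal (f n x)


/-- The almost-additive Gurevich pressure (as a `limsup`; under the standing hypotheses
the limit exists and coincides with it). -/
def press {S : Type*} (T : S → S → Prop) (f : ℕ → (ℕ → S) → ℝ) (a : S) : EReal :=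
  Filter.atTop.limsup (fun n : ℕ => ENNReal.log (ZFun T f n a) / ((n : ℝ) : EReal))


/-- The asymptotic average `lim (1/n) ∫ log f_n dμ`, written as an extended real via the
positive/negative parts of `log f_n` (as a `limsup`). -/
def lyap {S : Type*} [MeasurableSpace S] (μ : Measure (ℕ → S)) (f : ℕ → (ℕ → S) → ℝ) : EReal :=
  Filter.atTop.limsup (fun n : ℕ =>
    ((↑(∫⁻ x, ENNReal.ofReal (Real.log (f n x)) ∂μ) : EReal) -
      (↑(∫⁻ x, ENNReal.ofReal (-Real.log (f n x)) ∂μ) : EReal)) / ((n : ℝ) : EReal))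


/-- Entropy of the refined partition of level `n` associated with a countable measurable
partition `P` (indexed by `ℕ`). -/
def blockEnt {S : Type*} [MeasurableSpace S] (μ : Measure (ℕ → S)) (P : (ℕ → S) → ℕ)
    (n : ℕ) : ℝ≥0∞ :=
  ∑' c : Fin n → ℕ,
    ENNReal.ofReal (Real.negMulLog ((μ {x | ∀ i : Fin n, P (shf^[(i : ℕ)] x) = c i}).toReal))

/-- Kolmogorov–Sinai entropy: supremum over finite measurable partitions of the
asymptotic block entropy (for invariant measures the limit equals the infimum). -/
def hKS {S : Type*} [MeasurableSpace S] (μ : Measure (ℕ → S)) : ℝ≥0∞ :=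
  ⨆ P : {P : (ℕ → S) → ℕ // Measurable P ∧ (Set.range P).Finite},
    ⨅ n : ℕ, blockEnt μ (P : (ℕ → S) → ℕ) (n + 1) / ((n : ℝ≥0∞) + 1)

/-!
For the lower bound, choose finitely many points of period `n` through the state `a` which carry
almost all of `Z_n(F, a)` (or as much of it as needed, if it is infinite). They are loops at `a`,
so an i.i.d. sequence of them, drawn with the Gibbs weights proportional to `f_n`, can be
concatenated to a point of `Σ`. Averaging its law over the `n` phases gives a `σ`-invariant measure
for which, by the equality case of Gibbs' inequality, entropy plus energy is `(1/n) log Z_n(F, a)`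
up to `O(1/n)`.

For the upper bound, let `B > P(F)` and let `P` be a finite measurable partition. Since
`Z_p(F, a) ≤ exp (p B)` for large `p`, the weights `exp (-p B) f_p` on the periodic points form a
sub-probability. Choose a periodic point with these weights, read off its itinerary for a cylinder
approximation of `P`, and send it through a noisy channel; the resulting law `q` on words is almost
optimal as a code for the `P`-itineraries of an invariant measure `μ`. Indeed, if `x` starts and
ends in a fixed finite set of states, it is shadowed by a periodic point through `a`, whence
`-log q ≤ n B - log f_n (x)` up to a constant and the cost of the noise, which is linear in the
time that the orbit spends where the approximation fails; all other `x` have small measure.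
Gibbs' inequality bounds the entropy of the `P`-itineraries by `-∫ log q dμ`.
-/

section Entropy

variable {ι κ : Type*} [MeasurableSpace ι] [MeasurableSpace κ]

/-- The Shannon entropy of a measure on a finite type. The entropy of a finite-valued random
variable `g` on a probability space `(X, μ)` is `shannonEntropy (μ.map g)`. -/
def shannonEntropy [Fintype ι] (p : Measure ι) : ℝ := ∑ c, Real.negMulLog (p.real {c})

lemma shannonEntropy_nonneg [Fintype ι] (p : Measure ι) [IsProbabilityMeasure p] :
    0 ≤ shannonEntropy p :=
  Finset.sum_nonneg fun _ _ => Real.negMulLog_nonneg measureReal_nonneg measureReal_le_one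

lemma average_shannonEntropy_le [Fintype ι] {n : ℕ} (hn : 0 < n) (ν : ℕ → Measure ι)
    [∀ i, IsFiniteMeasure (ν i)] :
    (n : ℝ)⁻¹ * ∑ i ∈ Finset.range n, shannonEntropy (ν i)
      ≤ shannonEntropy ((n : ℝ≥0∞)⁻¹ • ∑ i ∈ Finset.range n, ν i) := by
  unfold shannonEntropy
  rw [Finset.sum_comm, Finset.mul_sum]
  refine Finset.sum_le_sum fun c _ => ?_
  have hJensen := Real.concaveOn_negMulLog.le_map_sum (t := Finset.range n)
    (w := fun _ => (n : ℝ)⁻¹) (p := fun i => (ν i).real {c}) (fun _ _ => by positivity)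
    (by simp [hn.ne']) fun _ _ => measureReal_nonneg
  simpa [← Finset.mul_sum, measureReal_def, Measure.finsetSum_apply, ENNReal.toReal_sum]
    using hJensen

lemma ae_measureReal_singleton_pos [Countable ι] (p : Measure ι) [IsFiniteMeasure p] :
    ∀ᵐ c ∂p, 0 < p.real {c} := by
  have hnull : p {c | p {c} = 0} = 0 :=
    (Set.biUnion_of_singleton {c | p {c} = 0}) ▸
      (measure_biUnion_null_iff (Set.to_countable _)).2 fun _ hc => hc
  filter_upwards [compl_mem_ae_iff.2 hnull] with c hc
  exact measureReal_nonneg.lt_of_ne' (mt (measureReal_eq_zero_iff).1 hc)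

variable [MeasurableSingletonClass ι] [MeasurableSingletonClass κ]

variable {Ω : Type*} [MeasurableSpace Ω] (m : Measure Ω) {g : Ω → ι} {h : Ω → κ}

lemma ae_measureReal_fiber_pos [Countable ι] [IsFiniteMeasure m] (hg : Measurable g) :
    ∀ᵐ ω ∂m, 0 < m.real (g ⁻¹' {g ω}) := by
  filter_upwards [ae_of_ae_map hg.aemeasurable (ae_measureReal_singleton_pos (m.map g))] with ω hω
  rwa [map_measureReal_apply hg (measurableSet_singleton _)] at hω

lemma integrable_comp_of_finite [Finite ι] [IsFiniteMeasure m] (hg : Measurable g) (u : ι → ℝ) :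
    Integrable (fun ω => u (g ω)) m :=
  Integrable.of_finite.comp_measurable hg

variable [Fintype ι] [Fintype κ]

lemma shannonEntropy_eq_integral (p : Measure ι) [IsFiniteMeasure p] :
    shannonEntropy p = ∫ c, -Real.log (p.real {c}) ∂p := by
  simp [shannonEntropy, Real.negMulLog, integral_fintype Integrable.of_finite]

lemma shannonEntropy_le_integral_neg_log (p : Measure ι) [IsProbabilityMeasure p] {q : ι → ℝ}
    (hq0 : ∀ c, 0 ≤ q c) (hq : ∀ᵐ c ∂p, 0 < q c) (hq1 : ∑ c, q c ≤ 1) :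
    shannonEntropy p ≤ ∫ c, -Real.log (q c) ∂p := by
  have hle (c : ι) : Real.negMulLog (p.real {c}) - p.real {c} * -Real.log (q c)
      ≤ q c - p.real {c} := by
    rcases eq_or_ne (p.real {c}) 0 with h0 | h0
    · simp [h0, hq0]
    have hp : 0 < p.real {c} := measureReal_nonneg.lt_of_ne' h0
    have hqc : 0 < q c := by
      by_contra hc
      exact h0 ((measureReal_eq_zero_iff).2 (measure_mono_null (by simpa using hc) hq))
    have hlog := mul_le_mul_of_nonneg_left (Real.log_le_sub_one_of_pos (div_pos hqc hp)) hp.le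
    rw [Real.log_div hqc.ne' hp.ne', mul_sub, mul_sub, mul_div_cancel₀ _ h0] at hlog
    unfold Real.negMulLog
    linarith
  have hsum := Finset.sum_le_sum fun c (_ : c ∈ Finset.univ) => hle c
  have hp1 : ∑ c, p.real {c} = 1 := by simp
  rw [Finset.sum_sub_distrib, Finset.sum_sub_distrib, hp1] at hsum
  rw [integral_fintype Integrable.of_finite]
  simp only [shannonEntropy, smul_eq_mul]
  linarith

lemma shannonEntropy_map_eq_integral [IsFiniteMeasure m] (hg : Measurable g) :
    shannonEntropy (m.map g) = ∫ ω, -Real.log (m.real (g ⁻¹' {g ω})) ∂m := by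
  rw [shannonEntropy_eq_integral,
    integral_map hg.aemeasurable Integrable.of_finite.aestronglyMeasurable]
  simp [map_measureReal_apply hg]

lemma shannonEntropy_map_le_of_factorsThrough [IsFiniteMeasure m] (hg : Measurable g)
    (hh : Measurable h) (hgh : h.FactorsThrough g) :
    shannonEntropy (m.map h) ≤ shannonEntropy (m.map g) := by
  rw [shannonEntropy_map_eq_integral m hg, shannonEntropy_map_eq_integral m hh]
  refine integral_mono_ae (integrable_comp_of_finite m hh fun c => -Real.log (m.real (h ⁻¹' {c})))
    (integrable_comp_of_finite m hg fun c => -Real.log (m.real (g ⁻¹' {c}))) ?_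
  filter_upwards [ae_measureReal_fiber_pos m hg] with ω hω
  exact neg_le_neg (Real.log_le_log hω (measureReal_mono fun ω' hω' => hgh hω'))

lemma shannonEntropy_map_prodMk_le [IsProbabilityMeasure m] (hg : Measurable g)
    (hh : Measurable h) :
    shannonEntropy (m.map fun ω => (g ω, h ω))
      ≤ shannonEntropy (m.map g) + shannonEntropy (m.map h) := by
  have hgh : Measurable fun ω => (g ω, h ω) := hg.prodMk hh
  have := Measure.isProbabilityMeasure_map (μ := m) hgh.aemeasurable
  have := Measure.isProbabilityMeasure_map (μ := m) hg.aemeasurable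
  have := Measure.isProbabilityMeasure_map (μ := m) hh.aemeasurable
  rw [shannonEntropy_map_eq_integral m hg, shannonEntropy_map_eq_integral m hh,
    ← integral_add (integrable_comp_of_finite m hg fun c => -Real.log (m.real (g ⁻¹' {c})))
      (integrable_comp_of_finite m hh fun c => -Real.log (m.real (h ⁻¹' {c})))]
  have hae : ∀ᵐ ω ∂m, 0 < m.real (g ⁻¹' {g ω}) ∧ 0 < m.real (h ⁻¹' {h ω}) :=
    (ae_measureReal_fiber_pos m hg).and (ae_measureReal_fiber_pos m hh)
  calc shannonEntropy (m.map fun ω => (g ω, h ω))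
      ≤ ∫ c, -Real.log ((m.map g).real {c.1} * (m.map h).real {c.2})
          ∂(m.map fun ω => (g ω, h ω)) := by
        refine shannonEntropy_le_integral_neg_log _
          (fun c => mul_nonneg measureReal_nonneg measureReal_nonneg) ?_ ?_
        · rw [ae_map_iff hgh.aemeasurable (Set.toFinite _).measurableSet]
          filter_upwards [hae] with ω hω
          simpa [map_measureReal_apply, hg, hh] using mul_pos hω.1 hω.2
        · simp [Fintype.sum_prod_type, ← Finset.mul_sum]
    _ = ∫ ω, -Real.log (m.real (g ⁻¹' {g ω})) + -Real.log (m.real (h ⁻¹' {h ω})) ∂m := by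
        rw [integral_map hgh.aemeasurable Integrable.of_finite.aestronglyMeasurable]
        refine integral_congr_ae ?_
        filter_upwards [hae] with ω hω
        rw [map_measureReal_apply hg (measurableSet_singleton _),
          map_measureReal_apply hh (measurableSet_singleton _),
          Real.log_mul hω.1.ne' hω.2.ne', neg_add]

lemma shannonEntropy_prod_pi (p : Measure ι) [IsProbabilityMeasure p] (J : Type*) [Fintype J]
    [Fintype (J → ι)] :
    shannonEntropy (Measure.pi fun _ : J => p) = Fintype.card J * shannonEntropy p := by
  have hpos : ∀ᵐ c ∂(Measure.pi fun _ : J => p), ∀ j, 0 < p.real {c j} :=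
    ae_all_iff.2 fun j =>
      (measurePreserving_eval (fun _ : J => p) j).quasiMeasurePreserving.ae
        (ae_measureReal_singleton_pos p)
  calc shannonEntropy (Measure.pi fun _ : J => p)
      = ∫ c, ∑ j, -Real.log (p.real {c j}) ∂(Measure.pi fun _ : J => p) := by
        rw [shannonEntropy_eq_integral]
        refine integral_congr_ae ?_
        filter_upwards [hpos] with c hc
        rw [measureReal_def, Measure.pi_singleton, ENNReal.toReal_prod, Finset.sum_neg_distrib]
        exact congrArg _ (Real.log_prod fun j _ => (hc j).ne')
    _ = ∑ _j : J, shannonEntropy p := by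
        rw [integral_finsetSum _ fun j _ => Integrable.of_finite]
        refine Finset.sum_congr rfl fun j _ => ?_
        rw [shannonEntropy_eq_integral]
        exact integral_comp_eval (μ := fun _ : J => p) (f := fun c => -Real.log (p.real {c}))
          Integrable.of_finite.aestronglyMeasurable
    _ = Fintype.card J * shannonEntropy p := by simp

lemma exists_shannonEntropy_add_integral_eq_log_sum_exp [Nonempty ι] (u : ι → ℝ) :
    ∃ p : Measure ι, IsProbabilityMeasure p ∧
      shannonEntropy p + ∫ c, u c ∂p = Real.log (∑ c, Real.exp (u c)) := by
  set Z := ∑ c, Real.exp (u c)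
  have hZ : 0 < Z := Finset.sum_pos (fun c _ => Real.exp_pos _) Finset.univ_nonempty
  let P : PMF ι := PMF.ofFintype (fun c => ENNReal.ofReal (Real.exp (u c) / Z)) (by
    rw [← ENNReal.ofReal_sum_of_nonneg fun c _ => by positivity, ← Finset.sum_div,
      div_self hZ.ne', ENNReal.ofReal_one])
  have hP (c : ι) : P.toMeasure.real {c} = Real.exp (u c) / Z := by
    rw [measureReal_def, P.toMeasure_apply_singleton c (measurableSet_singleton c),
      PMF.ofFintype_apply, ENNReal.toReal_ofReal (by positivity)]
  refine ⟨P.toMeasure, inferInstance, ?_⟩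
  rw [shannonEntropy_eq_integral, ← integral_add Integrable.of_finite Integrable.of_finite]
  simp [hP, Real.log_div, hZ.ne']

end Entropy

section PartitionEntropy

/-- The record of the first `n` steps of the orbit of `x` under `τ`, as seen by `P`. Its fibres
are the atoms of the refined partition `P ∨ τ⁻¹P ∨ ⋯ ∨ τ⁻⁽ⁿ⁻¹⁾P`. -/
def itinerary {X ι : Type*} (τ : X → X) (P : X → ι) (n : ℕ) (x : X) : Fin n → ι :=
  fun i => P (τ^[i] x)

lemma itinerary_add {X ι : Type*} (τ : X → X) (P : X → ι) (m n : ℕ) (x : X) :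
    itinerary τ P (m + n) x = Fin.append (itinerary τ P m x) (itinerary τ P n (τ^[m] x)) := by
  funext i
  refine Fin.addCases (fun i => ?_) (fun i => ?_) i
  · simp [itinerary]
  · simp [itinerary, ← Function.iterate_add_apply, add_comm]

variable {X ι : Type*} [MeasurableSpace X] [MeasurableSpace ι] {τ : X → X} {P : X → ι}

lemma measurable_itinerary (hτ : Measurable τ) (hP : Measurable P) (n : ℕ) :
    Measurable (itinerary τ P n) :=
  measurable_pi_lambda _ fun i => hP.comp (hτ.iterate i)

variable [Fintype ι]

/-- The entropy `lim H(P ∨ ⋯ ∨ τ⁻⁽ⁿ⁻¹⁾P) / n` of the finite partition into the fibres of `P`. As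
the sequence is subadditive for an invariant measure, the limit is encoded as an infimum. -/
def partitionEntropy (μ : Measure X) (τ : X → X) (P : X → ι) : ℝ :=
  ⨅ n : ℕ, shannonEntropy (μ.map (itinerary τ P (n + 1))) / (n + 1 : ℕ)

variable {μ : Measure X} [IsProbabilityMeasure μ]

lemma shannonEntropy_map_itinerary_nonneg (hτ : Measurable τ) (hP : Measurable P) (n : ℕ) :
    0 ≤ shannonEntropy (μ.map (itinerary τ P n)) :=
  have := Measure.isProbabilityMeasure_map (μ := μ) (measurable_itinerary hτ hP n).aemeasurable
  shannonEntropy_nonneg _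

lemma partitionEntropy_le_div (hτ : Measurable τ) (hP : Measurable P) {n : ℕ} (hn : 0 < n) :
    partitionEntropy μ τ P ≤ shannonEntropy (μ.map (itinerary τ P n)) / n := by
  obtain ⟨n, rfl⟩ := Nat.exists_eq_add_one.2 hn
  refine ciInf_le ⟨0, ?_⟩ n
  rintro _ ⟨k, rfl⟩
  exact div_nonneg (shannonEntropy_map_itinerary_nonneg hτ hP _) (Nat.cast_nonneg _)

lemma partitionEntropy_nonneg (hτ : Measurable τ) (hP : Measurable P) :
    0 ≤ partitionEntropy μ τ P :=
  Real.iInf_nonneg fun _ =>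
    div_nonneg (shannonEntropy_map_itinerary_nonneg hτ hP _) (Nat.cast_nonneg _)

variable [MeasurableSingletonClass ι]

lemma subadditive_shannonEntropy_map_itinerary (hτ : MeasurePreserving τ μ μ)
    (hP : Measurable P) : Subadditive fun n => shannonEntropy (μ.map (itinerary τ P n)) := by
  intro m n
  have hmeas := measurable_itinerary hτ.measurable hP
  have hmeas' : Measurable fun x => itinerary τ P n (τ^[m] x) :=
    (hmeas n).comp (hτ.measurable.iterate m)
  have hinv : μ.map (fun x => itinerary τ P n (τ^[m] x)) = μ.map (itinerary τ P n) := by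
    conv_rhs => rw [← (hτ.iterate m).map_eq]
    exact (Measure.map_map (hmeas n) (hτ.measurable.iterate m)).symm
  have hfac : (itinerary τ P (m + n)).FactorsThrough
      fun x => (itinerary τ P m x, itinerary τ P n (τ^[m] x)) := by
    intro x y hxy
    rw [itinerary_add, itinerary_add, (Prod.mk.inj hxy).1, (Prod.mk.inj hxy).2]
  calc shannonEntropy (μ.map (itinerary τ P (m + n)))
      ≤ shannonEntropy (μ.map fun x => (itinerary τ P m x, itinerary τ P n (τ^[m] x))) :=
        shannonEntropy_map_le_of_factorsThrough μ ((hmeas m).prodMk hmeas') (hmeas _) hfac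
    _ ≤ shannonEntropy (μ.map (itinerary τ P m)) + shannonEntropy (μ.map (itinerary τ P n)) :=
        hinv ▸ shannonEntropy_map_prodMk_le μ (hmeas m) hmeas'

lemma div_le_partitionEntropy (hτ : MeasurePreserving τ μ μ) (hP : Measurable P) {n : ℕ}
    (hn : 0 < n) {E : ℝ}
    (hE : ∀ k : ℕ, k * E ≤ shannonEntropy (μ.map (itinerary τ P ((k + 1) * n)))) :
    E / n ≤ partitionEntropy μ τ P := by
  refine le_ciInf fun m => ?_
  rw [div_le_div_iff₀ (by positivity) (by positivity)]
  set H : ℕ → ℝ := fun n => shannonEntropy (μ.map (itinerary τ P n))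
  change E * _ ≤ H (m + 1) * n
  have hsub : Subadditive H := subadditive_shannonEntropy_map_itinerary hτ hP
  have hbound (k : ℕ) : k * (E * (m + 1 : ℕ) - H (m + 1) * n) ≤ H n := by
    have hlower : (k * (m + 1) : ℕ) * E ≤ H (k * n * (m + 1) + n) :=
      (hE _).trans_eq (congrArg H (by ring))
    have hupper := hsub.apply_mul_add_le (k * n) (m + 1) n
    push_cast at hlower hupper ⊢
    linarith
  by_contra! hlt
  obtain ⟨k, hk⟩ := Archimedean.arch (H n + 1) (sub_pos.2 hlt)
  rw [nsmul_eq_mul] at hk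
  linarith [hbound k]

end PartitionEntropy

section KolmogorovSinai

variable {S : Type*}

lemma iterate_shf_apply (n : ℕ) (x : ℕ → S) (i : ℕ) : shf^[n] x i = x (i + n) := by
  induction n generalizing x with
  | zero => rfl
  | succ n ih => simp [ih, shf, add_assoc]

variable [MeasurableSpace S]

lemma measurable_shf : Measurable (shf : (ℕ → S) → ℕ → S) :=
  measurable_pi_lambda _ fun i => measurable_pi_apply (i + 1)

variable {ι : Type*} [Fintype ι] [MeasurableSpace ι] [MeasurableSingletonClass ι]
  {μ : Measure (ℕ → S)} [IsProbabilityMeasure μ] {P : (ℕ → S) → ι} {e : ι → ℕ}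

lemma blockEnt_comp (hP : Measurable P) (he : Function.Injective e) (n : ℕ) :
    blockEnt μ (e ∘ P) n = ENNReal.ofReal (shannonEntropy (μ.map (itinerary shf P n))) := by
  have hmeas := measurable_itinerary measurable_shf hP n
  have := Measure.isProbabilityMeasure_map (μ := μ) hmeas.aemeasurable
  have hatom (c : Fin n → ℕ) : {x | ∀ i : Fin n, (e ∘ P) (shf^[(i : ℕ)] x) = c i}
      = itinerary shf P n ⁻¹' {b | e ∘ b = c} := by
    ext x
    simp [itinerary, funext_iff]
  have hfib (b : Fin n → ι) : {b' | e ∘ b' = e ∘ b} = {b} :=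
    Set.ext fun b' => he.comp_left.eq_iff
  have hsupp : Function.support (fun c : Fin n → ℕ => ENNReal.ofReal (Real.negMulLog
      (μ (itinerary shf P n ⁻¹' {b | e ∘ b = c})).toReal)) ⊆ Set.range fun b => e ∘ b := by
    intro c hc
    by_contra hne
    have : {b | e ∘ b = c} = ∅ := Set.eq_empty_of_forall_notMem fun b hb => hne ⟨b, hb⟩
    exact hc (by simp only [this]; simp)
  simp only [blockEnt, hatom]
  rw [← (he.comp_left (α := Fin n)).tsum_eq hsupp, tsum_fintype, shannonEntropy,
    ENNReal.ofReal_sum_of_nonneg fun _ _ =>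
      Real.negMulLog_nonneg measureReal_nonneg measureReal_le_one]
  simp [hfib, map_measureReal_apply hmeas, measureReal_def]

lemma iInf_blockEnt_comp_div (hP : Measurable P) (he : Function.Injective e) :
    ⨅ n : ℕ, blockEnt μ (e ∘ P) (n + 1) / ((n : ℝ≥0∞) + 1)
      = ENNReal.ofReal (partitionEntropy μ shf P) := by
  rw [partitionEntropy, ENNReal.ofReal_iInf]
  refine iInf_congr fun n => ?_
  rw [blockEnt_comp hP he, ENNReal.ofReal_div_of_pos (by positivity), ENNReal.ofReal_natCast]
  push_cast
  rfl

lemma ofReal_partitionEntropy_le_hKS (hP : Measurable P) :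
    ENNReal.ofReal (partitionEntropy μ shf P) ≤ hKS μ := by
  let e : ι → ℕ := fun c => Fintype.equivFin ι c
  have he : Function.Injective e := Fin.val_injective.comp (Fintype.equivFin ι).injective
  rw [← iInf_blockEnt_comp_div hP he]
  exact le_iSup (fun Q : {Q : (ℕ → S) → ℕ // Measurable Q ∧ (Set.range Q).Finite} =>
    ⨅ n : ℕ, blockEnt μ (Q : (ℕ → S) → ℕ) (n + 1) / ((n : ℝ≥0∞) + 1))
    ⟨e ∘ P, (measurable_of_finite e).comp hP,
      (Set.finite_range e).subset (Set.range_comp_subset_range P e)⟩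

lemma exists_lt_partitionEntropy_of_lt_hKS {b : ℝ≥0∞} (hb : b < hKS μ) :
    ∃ (R : Finset ℕ) (P : (ℕ → S) → R), Measurable P ∧
      b < ENNReal.ofReal (partitionEntropy μ shf P) := by
  obtain ⟨⟨Q, hQ, hfin⟩, hbQ⟩ := lt_iSup_iff.1 hb
  have hmem (x : ℕ → S) : Q x ∈ hfin.toFinset := by simp
  generalize hfin.toFinset = R at hmem
  let P (x : ℕ → S) : R := ⟨Q x, hmem x⟩
  have hP : Measurable P := hQ.subtype_mk
  have hblock := iInf_blockEnt_comp_div (μ := μ) hP Subtype.val_injective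
  exact ⟨R, P, hP, hblock ▸ hbQ⟩

end KolmogorovSinai

section Lyapunov

lemma lintegral_sub_lintegral_eq_integral {X : Type*} [MeasurableSpace X] {μ : Measure X}
    {g : X → ℝ} (hg : Integrable g μ) :
    (↑(∫⁻ x, ENNReal.ofReal (g x) ∂μ) : EReal) - ↑(∫⁻ x, ENNReal.ofReal (-g x) ∂μ)
      = (∫ x, g x ∂μ : ℝ) := by
  rw [integral_eq_lintegral_pos_part_sub_lintegral_neg_part hg, EReal.coe_sub,
    EReal.coe_ennreal_toReal hg.lintegral_lt_top.ne,
    EReal.coe_ennreal_toReal (show Integrable (fun x => -g x) μ from hg.neg).lintegral_lt_top.ne]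

lemma lintegral_sub_lintegral_eq_bot {X : Type*} [MeasurableSpace X] {μ : Measure X}
    [IsFiniteMeasure μ] {g : X → ℝ} (hmeas : AEStronglyMeasurable g μ) {b : ℝ}
    (hb : ∀ᵐ x ∂μ, g x ≤ b) (hg : ¬ Integrable g μ) :
    (↑(∫⁻ x, ENNReal.ofReal (g x) ∂μ) : EReal) - ↑(∫⁻ x, ENNReal.ofReal (-g x) ∂μ) = ⊥ := by
  have hpos : Integrable (fun x => max (g x) 0) μ := by
    refine (integrable_const (max b 0)).mono' (hmeas.sup aestronglyMeasurable_const) ?_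
    filter_upwards [hb] with x hx
    rw [Real.norm_of_nonneg (le_max_right _ _)]
    exact max_le_max_right 0 hx
  have hneg : ∫⁻ x, ENNReal.ofReal (-g x) ∂μ = ⊤ := by
    by_contra hfin
    have hmeas' : AEStronglyMeasurable (fun x => max (-g x) 0) μ :=
      hmeas.neg.sup aestronglyMeasurable_const
    have hint : Integrable (fun x => max (-g x) 0) μ :=
      (lintegral_ofReal_ne_top_iff_integrable hmeas' (ae_of_all _ fun _ => le_max_right _ _)).1
        (by simpa [ENNReal.ofReal_max] using hfin)
    exact hg ((hpos.sub hint).congr (ae_of_all _ fun x => max_zero_sub_eq_self (g x)))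
  rw [hneg, EReal.coe_ennreal_top, EReal.sub_top]

lemma ereal_div_natCast_le_coe_iff {x : EReal} {n : ℕ} (hn : 0 < n) {r : ℝ} :
    x / ((n : ℝ) : EReal) ≤ r ↔ x ≤ (n * r : ℝ) := by
  rw [EReal.div_le_iff_le_mul (by exact_mod_cast hn) (EReal.coe_ne_top _), EReal.coe_mul]

variable {S : Type*} [MeasurableSpace S] {μ : Measure (ℕ → S)} {f : ℕ → (ℕ → S) → ℝ}

lemma lyap_le_of_eventually_integral_le [IsFiniteMeasure μ] (hmeas : ∀ n, Measurable (f n))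
    (hbdd : ∀ᶠ n in atTop, ∃ b : ℝ, ∀ᵐ x ∂μ, Real.log (f n x) ≤ b) {r c : ℝ}
    (hle : ∀ᶠ n : ℕ in atTop, Integrable (fun x => Real.log (f n x)) μ →
      ∫ x, Real.log (f n x) ∂μ ≤ n * r + c) :
    lyap μ f ≤ r := by
  refine EReal.le_of_forall_lt_iff_le.1 fun r' hr' => ?_
  have hrr' : 0 < r' - r := sub_pos.2 (EReal.coe_lt_coe_iff.1 hr')
  refine limsup_le_of_le (h := ?_)
  filter_upwards [hbdd, hle, eventually_gt_atTop 0, eventually_ge_atTop ⌈c / (r' - r)⌉₊]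
    with n ⟨b, hb⟩ hn hn0 hnc
  rw [ereal_div_natCast_le_coe_iff hn0]
  by_cases hint : Integrable (fun x => Real.log (f n x)) μ
  · rw [lintegral_sub_lintegral_eq_integral hint, EReal.coe_le_coe_iff]
    have hc : c ≤ n * (r' - r) := (div_le_iff₀ hrr').1 (Nat.ceil_le.1 hnc)
    linarith [hn hint]
  · rw [lintegral_sub_lintegral_eq_bot (hmeas n).log.aestronglyMeasurable hb hint]
    exact bot_le

lemma le_lyap_of_frequently_le_integral {r : ℝ}
    (hle : ∃ᶠ n : ℕ in atTop, Integrable (fun x => Real.log (f n x)) μ ∧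
      n * r ≤ ∫ x, Real.log (f n x) ∂μ) :
    r ≤ lyap μ f := by
  refine le_limsup_of_frequently_le ((hle.and_eventually (eventually_gt_atTop 0)).mono ?_)
  rintro n ⟨⟨hint, hn⟩, hn0⟩
  rw [lintegral_sub_lintegral_eq_integral hint, ← EReal.coe_div, EReal.coe_le_coe_iff,
    le_div_iff₀' (by exact_mod_cast hn0)]
  exact hn

end Lyapunov

section AlmostAdditive

variable {S : Type*}

/-- An almost-additive Bowen sequence on the Markov shift of `T` which is bounded above in the
first coordinate, in the logarithmic form `φ n = log (f n)`. A single constant `C` bounds both the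
defect of additivity and the distortion on cylinders. -/
structure IsAlmostAdditiveBowen (T : S → S → Prop) (φ : ℕ → (ℕ → S) → ℝ) (C K : ℝ) : Prop where
  bowen : ∀ n, 0 < n → ∀ x ∈ shiftSpace T, ∀ y ∈ shiftSpace T, (∀ i < n, x i = y i) →
    φ n x ≤ φ n y + C
  add_le : ∀ m n, 0 < m → 0 < n → ∀ x ∈ shiftSpace T,
    φ m x + φ n (shf^[m] x) ≤ φ (m + n) x + C
  le_add : ∀ m n, 0 < m → 0 < n → ∀ x ∈ shiftSpace T,
    φ (m + n) x ≤ φ m x + φ n (shf^[m] x) + C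
  one_le : ∀ x ∈ shiftSpace T, φ 1 x ≤ K

variable {T : S → S → Prop}

lemma iterate_shf_mem_shiftSpace {x : ℕ → S} (hx : x ∈ shiftSpace T) (n : ℕ) :
    shf^[n] x ∈ shiftSpace T := by
  intro i
  rw [iterate_shf_apply, iterate_shf_apply, add_right_comm]
  exact hx (i + n)

lemma measurableSet_shiftSpace [Countable S] [MeasurableSpace S] [MeasurableSingletonClass S]
    (T : S → S → Prop) : MeasurableSet (shiftSpace T) := by
  have : shiftSpace T = ⋂ i, (fun x : ℕ → S => (x i, x (i + 1))) ⁻¹' {p | T p.1 p.2} := by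
    ext x
    simp [shiftSpace]
  rw [this]
  exact MeasurableSet.iInter fun i => ((measurable_pi_apply i).prodMk (measurable_pi_apply (i + 1)))
    (Set.to_countable _).measurableSet

namespace IsAlmostAdditiveBowen

variable {φ : ℕ → (ℕ → S) → ℝ} {C K : ℝ}

lemma of_exp {f : ℕ → (ℕ → S) → ℝ} {M : ℝ} (hM : 0 < M)
    (hpos : ∀ n, 0 < n → ∀ x ∈ shiftSpace T, 0 < f n x)
    (hBowen : ∀ n, 0 < n → ∀ x ∈ shiftSpace T, ∀ y ∈ shiftSpace T,
      (∀ i < n, x i = y i) → f n x ≤ M * f n y)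
    (hAA : ∀ m n, 0 < m → 0 < n → ∀ x ∈ shiftSpace T,
      f m x * f n (shf^[m] x) * Real.exp (-C) ≤ f (m + n) x ∧
        f (m + n) x ≤ Real.exp C * (f m x * f n (shf^[m] x)))
    (hsup : ∀ x ∈ shiftSpace T, f 1 x ≤ K) :
    IsAlmostAdditiveBowen T (fun n x => Real.log (f n x)) (max C (Real.log M))
      (Real.log K) where
  bowen n hn x hx y hy hxy := by
    have hlog := Real.log_le_log (hpos n hn x hx) (hBowen n hn x hx y hy hxy)
    rw [Real.log_mul hM.ne' (hpos n hn y hy).ne'] at hlog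
    linarith [le_max_right C (Real.log M)]
  add_le m n hm hn x hx := by
    have hfm := hpos m hm x hx
    have hfn := hpos n hn _ (iterate_shf_mem_shiftSpace hx m)
    have hlog := Real.log_le_log (by positivity) (hAA m n hm hn x hx).1
    rw [Real.log_mul (by positivity) (by positivity), Real.log_exp,
      Real.log_mul hfm.ne' hfn.ne'] at hlog
    linarith [le_max_left C (Real.log M)]
  le_add m n hm hn x hx := by
    have hfm := hpos m hm x hx
    have hfn := hpos n hn _ (iterate_shf_mem_shiftSpace hx m)
    have hlog := Real.log_le_log (hpos (m + n) (by omega) x hx) (hAA m n hm hn x hx).2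
    rw [Real.log_mul (by positivity) (by positivity), Real.log_exp,
      Real.log_mul hfm.ne' hfn.ne'] at hlog
    linarith [le_max_left C (Real.log M)]
  one_le x hx := Real.log_le_log (hpos 1 one_pos x hx) (hsup x hx)

lemma const_nonneg (H : IsAlmostAdditiveBowen T φ C K) {x : ℕ → S} (hx : x ∈ shiftSpace T) :
    0 ≤ C := by
  linarith [H.add_le 1 1 one_pos one_pos x hx, H.le_add 1 1 one_pos one_pos x hx]

lemma le_mul (H : IsAlmostAdditiveBowen T φ C K) {n : ℕ} (hn : 0 < n) {x : ℕ → S}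
    (hx : x ∈ shiftSpace T) :
    φ n x ≤ n * (|K| + C) := by
  have hC := H.const_nonneg hx
  induction n, hn using Nat.le_induction with
  | base => simpa using ((H.one_le x hx).trans (le_abs_self K)).trans (le_add_of_nonneg_right hC)
  | succ n hn ih =>
    have hadd := H.le_add n 1 hn one_pos x hx
    have hone := (H.one_le _ (iterate_shf_mem_shiftSpace hx n)).trans (le_abs_self K)
    push_cast
    linarith

lemma add_le_of_le_add_mul (H : IsAlmostAdditiveBowen T φ C K) {n k : ℕ} (hn : 0 < n)
    {x : ℕ → S} (hx : x ∈ shiftSpace T) {A B L ℓ : ℝ} (hL : 0 ≤ L) (hℓ : ℓ ≤ A + n * L) :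
    φ (n + k) x + ℓ ≤ (n + k : ℕ) * B + A + (n + k : ℕ) * (|K| + C + L + |B|) := by
  have hφ := H.le_mul (Nat.add_pos_left hn k) hx
  have hkL : (n : ℝ) * L ≤ (n + k : ℕ) * L := by gcongr; omega
  have hB : 0 ≤ ((n + k : ℕ) : ℝ) * (B + |B|) :=
    mul_nonneg (Nat.cast_nonneg _) (by linarith [neg_abs_le B])
  linarith

variable [MeasurableSpace S] {μ : Measure (ℕ → S)} [IsProbabilityMeasure μ]

lemma integrable_add (H : IsAlmostAdditiveBowen T φ C K) (hmeas : ∀ n, Measurable (φ n))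
    (hσ : MeasurePreserving shf μ μ) (hμ : ∀ᵐ x ∂μ, x ∈ shiftSpace T) {m n : ℕ} (hm : 0 < m)
    (hn : 0 < n) (hφm : Integrable (φ m) μ) (hφn : Integrable (φ n) μ) :
    Integrable (φ (m + n)) μ ∧ ∫ x, φ m x ∂μ + ∫ x, φ n x ∂μ - C ≤ ∫ x, φ (m + n) x ∂μ := by
  have hσm := hσ.iterate m
  have hshift : ∫ x, φ n (shf^[m] x) ∂μ = ∫ x, φ n x ∂μ := by
    conv_rhs => rw [← hσm.map_eq]
    exact (integral_map hσm.aemeasurable (hmeas n).aestronglyMeasurable).symm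
  have hφn' : Integrable (fun x => φ n (shf^[m] x)) μ := hσm.integrable_comp_of_integrable hφn
  have hsum : Integrable (fun x => φ m x + φ n (shf^[m] x)) μ := hφm.add hφn'
  have hlower : ∀ᵐ x ∂μ, φ m x + φ n (shf^[m] x) - C ≤ φ (m + n) x :=
    hμ.mono fun x hx => sub_le_iff_le_add.2 (H.add_le m n hm hn x hx)
  have hupper : ∀ᵐ x ∂μ, φ (m + n) x ≤ φ m x + φ n (shf^[m] x) + C :=
    hμ.mono fun x hx => H.le_add m n hm hn x hx
  have hint : Integrable (φ (m + n)) μ :=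
    integrable_of_le_of_le (hmeas _).aestronglyMeasurable hlower hupper
      (hsum.sub (integrable_const C)) (hsum.add (integrable_const C))
  refine ⟨hint, ?_⟩
  calc ∫ x, φ m x ∂μ + ∫ x, φ n x ∂μ - C
      = ∫ x, φ m x + φ n (shf^[m] x) - C ∂μ := by
        rw [integral_sub hsum (integrable_const C), integral_add hφm hφn', hshift]
        simp
    _ ≤ ∫ x, φ (m + n) x ∂μ := integral_mono_ae (hsum.sub (integrable_const C)) hint hlower

lemma integrable_mul (H : IsAlmostAdditiveBowen T φ C K) (hmeas : ∀ n, Measurable (φ n))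
    (hσ : MeasurePreserving shf μ μ) (hμ : ∀ᵐ x ∂μ, x ∈ shiftSpace T) {n : ℕ} (hn : 0 < n)
    (hint : Integrable (φ n) μ) (k : ℕ) :
    Integrable (φ ((k + 1) * n)) μ ∧
      (k + 1) * (∫ x, φ n x ∂μ - C) ≤ ∫ x, φ ((k + 1) * n) x ∂μ - C := by
  induction k with
  | zero => simpa using hint
  | succ k ih =>
    obtain ⟨hadd, hle⟩ := H.integrable_add hmeas hσ hμ (by positivity) hn ih.1 hint
    rw [add_mul (k + 1), one_mul]
    refine ⟨hadd, ?_⟩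
    push_cast
    linarith [ih.2]

lemma le_lyap {f : ℕ → (ℕ → S) → ℝ} (H : IsAlmostAdditiveBowen T (fun n x => Real.log (f n x)) C K)
    (hmeas : ∀ n, Measurable (f n)) (hσ : MeasurePreserving shf μ μ)
    (hμ : ∀ᵐ x ∂μ, x ∈ shiftSpace T) {n : ℕ} (hn : 0 < n)
    (hint : Integrable (fun x => Real.log (f n x)) μ) :
    (((∫ x, Real.log (f n x) ∂μ - C) / n : ℝ) : EReal) ≤ lyap μ f := by
  obtain ⟨x, hx⟩ := hμ.exists
  have hC := H.const_nonneg hx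
  refine le_lyap_of_frequently_le_integral (frequently_atTop.2 fun N => ⟨(N + 1) * n, ?_, ?_⟩)
  · nlinarith
  obtain ⟨hk, hle⟩ := H.integrable_mul (fun n => (hmeas n).log) hσ hμ hn hint N
  refine ⟨hk, ?_⟩
  push_cast
  rw [mul_assoc, mul_div_cancel₀ _ (by positivity)]
  linarith

end IsAlmostAdditiveBowen

end AlmostAdditive

section OrbitAverage

variable {X : Type*} [MeasurableSpace X] {τ : X → X} {n : ℕ} {ν : Measure X}

/-- The average of the first `n` push-forwards of `ν` under `τ`. It is the invariant measure
generated by a measure `ν` which is only invariant under `τ^[n]`. -/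
def orbitAverage (τ : X → X) (n : ℕ) (ν : Measure X) : Measure X :=
  (n : ℝ≥0∞)⁻¹ • ∑ i ∈ Finset.range n, ν.map τ^[i]

lemma measurePreserving_orbitAverage (hτ : Measurable τ) (hν : ν.map τ^[n] = ν) :
    MeasurePreserving τ (orbitAverage τ n ν) (orbitAverage τ n ν) := by
  refine ⟨hτ, ?_⟩
  have hstep (i : ℕ) : (ν.map τ^[i]).map τ = ν.map τ^[i + 1] := by
    rw [Measure.map_map hτ (hτ.iterate i), Function.iterate_succ']
  rw [orbitAverage, Measure.map_smul, Measure.map_finset_sum hτ.aemeasurable]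
  simp only [hstep]
  cases n with
  | zero => simp
  | succ n => rw [Finset.sum_range_succ, hν, Finset.sum_range_succ', Function.iterate_zero,
      Measure.map_id]

lemma ae_orbitAverage (hτ : Measurable τ) {Q : X → Prop} (hQ : MeasurableSet {x | Q x})
    (h : ∀ i < n, ∀ᵐ x ∂ν, Q (τ^[i] x)) : ∀ᵐ x ∂(orbitAverage τ n ν), Q x := by
  refine Measure.ae_smul_measure (ae_finsetSum_measure_iff.2 fun i hi => ?_) _
  exact (ae_map_iff (hτ.iterate i).aemeasurable hQ).2 (h i (Finset.mem_range.1 hi))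

lemma le_integral_orbitAverage (hτ : Measurable τ) (hn : 0 < n) {g : X → ℝ} (hg : Measurable g)
    {c : ℝ} (h : ∀ i < n, Integrable (fun x => g (τ^[i] x)) ν ∧ c ≤ ∫ x, g (τ^[i] x) ∂ν) :
    Integrable g (orbitAverage τ n ν) ∧ c ≤ ∫ x, g x ∂(orbitAverage τ n ν) := by
  have hint : ∀ i ∈ Finset.range n, Integrable g (ν.map τ^[i]) := fun i hi =>
    (integrable_map_measure hg.aestronglyMeasurable (hτ.iterate i).aemeasurable).2
      (h i (Finset.mem_range.1 hi)).1
  refine ⟨(integrable_finsetSum_measure.2 hint).smul_measure (by simp [hn.ne']), ?_⟩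
  rw [orbitAverage, integral_smul_measure, integral_finsetSum_measure hint, ENNReal.toReal_inv,
    ENNReal.toReal_natCast, smul_eq_mul, inv_mul_eq_div, le_div_iff₀ (by positivity), mul_comm,
    ← nsmul_eq_mul]
  have hsum := Finset.card_nsmul_le_sum (Finset.range n) (fun i => ∫ x, g x ∂(ν.map τ^[i])) c
    fun i hi => by
      rw [integral_map (hτ.iterate i).aemeasurable hg.aestronglyMeasurable]
      exact (h i (Finset.mem_range.1 hi)).2
  simpa using hsum

variable [IsProbabilityMeasure ν]

lemma isProbabilityMeasure_orbitAverage (hτ : Measurable τ) (hn : 0 < n) :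
    IsProbabilityMeasure (orbitAverage τ n ν) := by
  have (i : ℕ) := Measure.isProbabilityMeasure_map (μ := ν) (hτ.iterate i).aemeasurable
  constructor
  simp [orbitAverage, Measure.finsetSum_apply, ENNReal.inv_mul_cancel, hn.ne']

lemma le_shannonEntropy_map_orbitAverage {ι : Type*} [Fintype ι] [MeasurableSpace ι]
    (hτ : Measurable τ) (hn : 0 < n) {g : X → ι} (hg : Measurable g) {E : ℝ}
    (h : ∀ i < n, E ≤ shannonEntropy (ν.map (g ∘ τ^[i]))) :
    E ≤ shannonEntropy ((orbitAverage τ n ν).map g) := by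
  have hmap : (orbitAverage τ n ν).map g
      = (n : ℝ≥0∞)⁻¹ • ∑ i ∈ Finset.range n, ν.map (g ∘ τ^[i]) := by
    simp only [orbitAverage, Measure.map_smul, Measure.map_finset_sum hg.aemeasurable,
      Measure.map_map hg (hτ.iterate _)]
  rw [hmap]
  refine le_trans ?_ (average_shannonEntropy_le hn _)
  rw [inv_mul_eq_div, le_div_iff₀ (by positivity), mul_comm, ← nsmul_eq_mul]
  simpa using Finset.card_nsmul_le_sum (Finset.range n) _ E fun i hi => h i (Finset.mem_range.1 hi)

end OrbitAverage

section Concatenation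

lemma infinitePi_map_shf {ι : Type*} [MeasurableSpace ι] (p : Measure ι) [IsProbabilityMeasure p] :
    (Measure.infinitePi fun _ : ℕ => p).map shf = Measure.infinitePi fun _ => p := by
  refine Measure.eq_infinitePi _ fun s t ht => ?_
  have hpre : shf ⁻¹' (s : Set ℕ).pi t
      = ((s.map (addRightEmbedding 1) : Finset ℕ) : Set ℕ).pi fun j => t (j - 1) := by
    ext ω
    simp [Set.mem_pi, shf]
  rw [Measure.map_apply measurable_shf (.pi s.countable_toSet fun i _ => ht i), hpre,
    Measure.infinitePi_pi _ fun j _ => ht _]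
  simp

variable {S ι : Type*} {n : ℕ} {w : ι → ℕ → S}

/-- The sequence obtained by writing one after the other the initial words of length `n` of
`w (ω 0), w (ω 1), w (ω 2), …`. -/
def concat (n : ℕ) (w : ι → ℕ → S) (ω : ℕ → ι) : ℕ → S := fun j => w (ω (j / n)) (j % n)

lemma concat_mul_add (w : ι → ℕ → S) (ω : ℕ → ι) (k : ℕ) {t : ℕ} (ht : t < n) :
    concat n w ω (k * n + t) = w (ω k) t := by
  rw [concat, mul_comm, Nat.mul_add_div (by omega), Nat.mul_add_mod, Nat.div_eq_of_lt ht,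
    Nat.mod_eq_of_lt ht, add_zero]

lemma concat_of_lt (w : ι → ℕ → S) (ω : ℕ → ι) {t : ℕ} (ht : t < n) :
    concat n w ω t = w (ω 0) t := by
  simpa using concat_mul_add w ω 0 ht

lemma iterate_shf_concat (hn : 0 < n) (w : ι → ℕ → S) (ω : ℕ → ι) :
    shf^[n] (concat n w ω) = concat n w (shf ω) := by
  funext j
  rw [iterate_shf_apply, concat, concat, Nat.add_div_right _ hn, Nat.add_mod_right]
  rfl

lemma concat_mem_shiftSpace {T : S → S → Prop} {a : S} (hn : 0 < n)
    (hw : ∀ k, w k ∈ shiftSpace T) (hw0 : ∀ k, w k 0 = a) (hwn : ∀ k, w k n = a) (ω : ℕ → ι) :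
    concat n w ω ∈ shiftSpace T := by
  intro j
  obtain ⟨k, t, ht, rfl⟩ : ∃ k t, t < n ∧ j = k * n + t :=
    ⟨j / n, j % n, Nat.mod_lt _ hn, (Nat.div_add_mod' j n).symm⟩
  have hT := hw (ω k) t
  rw [concat_mul_add w ω k ht]
  obtain ht' | ht' : t + 1 < n ∨ t + 1 = n := by omega
  · rwa [add_assoc, concat_mul_add w ω k ht']
  · have hnext := concat_mul_add w ω (k + 1) hn
    rw [add_mul, one_mul, add_zero] at hnext
    rw [add_assoc, ht', hnext, hw0]
    rwa [ht', hwn] at hT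

variable [MeasurableSpace S] [MeasurableSpace ι] [MeasurableSingletonClass ι]

lemma measurable_concat [Countable ι] (n : ℕ) (w : ι → ℕ → S) : Measurable (concat n w) :=
  measurable_pi_lambda _ fun j =>
    (measurable_of_countable fun k => w k (j % n)).comp (measurable_pi_apply (j / n))

/-- The law of an infinite concatenation of independent words of length `n`, the word `w k` being
drawn with probability `p {k}`, averaged over the `n` positions of the origin within a word so as
to become shift-invariant. -/
def concatMeasure (n : ℕ) (w : ι → ℕ → S) (p : Measure ι) [IsProbabilityMeasure p] :
    Measure (ℕ → S) :=
  orbitAverage shf n ((Measure.infinitePi fun _ => p).map (concat n w))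

variable {p : Measure ι} [IsProbabilityMeasure p] [Countable ι]

lemma isProbabilityMeasure_map_concat :
    IsProbabilityMeasure ((Measure.infinitePi fun _ : ℕ => p).map (concat n w)) :=
  Measure.isProbabilityMeasure_map (measurable_concat n w).aemeasurable

lemma isProbabilityMeasure_concatMeasure (hn : 0 < n) :
    IsProbabilityMeasure (concatMeasure n w p) :=
  have := isProbabilityMeasure_map_concat (n := n) (w := w) (p := p)
  isProbabilityMeasure_orbitAverage measurable_shf hn

lemma measurePreserving_concatMeasure (hn : 0 < n) :
    MeasurePreserving shf (concatMeasure n w p) (concatMeasure n w p) := by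
  refine measurePreserving_orbitAverage measurable_shf ?_
  rw [Measure.map_map (measurable_shf.iterate n) (measurable_concat n w)]
  conv_rhs => rw [← infinitePi_map_shf p, Measure.map_map (measurable_concat n w) measurable_shf]
  exact congrArg (Measure.map · _) (funext (iterate_shf_concat hn w))

lemma ae_mem_shiftSpace_concatMeasure [Countable S] [MeasurableSingletonClass S]
    {T : S → S → Prop} {a : S} (hn : 0 < n) (hw : ∀ k, w k ∈ shiftSpace T) (hw0 : ∀ k, w k 0 = a)
    (hwn : ∀ k, w k n = a) : ∀ᵐ x ∂(concatMeasure n w p), x ∈ shiftSpace T := by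
  refine ae_orbitAverage measurable_shf (measurableSet_shiftSpace T) fun i _ => ?_
  refine (ae_map_iff (measurable_concat n w).aemeasurable
    (measurable_shf.iterate i (measurableSet_shiftSpace T))).2 (ae_of_all _ fun ω => ?_)
  exact iterate_shf_mem_shiftSpace (concat_mem_shiftSpace hn hw hw0 hwn ω) i

end Concatenation

section ConcatenationEntropy

variable {S ι : Type*} {n : ℕ} {w : ι → ℕ → S}

/-- The partition of sequences according to which letters of the initial words of length `n` of
the `w k` agree with the first coordinate. -/
def letterPartition (n : ℕ) (w : ι → ℕ → S) (x : ℕ → S) : ι × Fin n → Prop :=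
  fun b => w b.1 b.2 = x 0

/-- For an origin within the first word, the itinerary determines the words number `1, …, k`. -/
lemma restrict_factorsThrough_itinerary (hinj : ∀ k k', (∀ t < n, w k t = w k' t) → k = k')
    {i : ℕ} (hi : i < n) (k : ℕ) :
    (Finset.Icc 1 k).restrict.FactorsThrough
      (itinerary shf (letterPartition n w) ((k + 1) * n) ∘ shf^[i] ∘ concat n w) := by
  intro ω ω' h
  funext ⟨j, hj⟩
  rw [Finset.mem_Icc] at hj
  refine hinj _ _ fun t ht => ?_
  have hlow : n ≤ j * n := Nat.le_mul_of_pos_left n hj.1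
  have hup : j * n ≤ k * n := Nat.mul_le_mul_right n hj.2
  have hpos : j * n + t - i + i = j * n + t := by omega
  have hword := congrFun (congrFun h ⟨j * n + t - i, by rw [add_mul]; omega⟩) (ω j, ⟨t, ht⟩)
  simpa [itinerary, letterPartition, iterate_shf_apply, hpos, concat_mul_add, ht] using hword

variable [MeasurableSpace S] [Countable S] [MeasurableSingletonClass S]

lemma measurable_letterPartition : Measurable (letterPartition n w) :=
  measurable_pi_lambda _ fun b =>
    (measurable_of_countable fun s => w b.1 b.2 = s).comp (measurable_pi_apply 0)

variable [Fintype ι] [MeasurableSpace ι] [MeasurableSingletonClass ι] {p : Measure ι}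
  [IsProbabilityMeasure p]

lemma ofReal_shannonEntropy_div_le_hKS_concatMeasure (hn : 0 < n)
    (hinj : ∀ k k', (∀ t < n, w k t = w k' t) → k = k') :
    ENNReal.ofReal (shannonEntropy p / n) ≤ hKS (concatMeasure n w p) := by
  classical
  have := isProbabilityMeasure_map_concat (n := n) (w := w) (p := p)
  have := isProbabilityMeasure_concatMeasure (w := w) (p := p) hn
  have hP := measurable_letterPartition (n := n) (w := w)
  refine (ENNReal.ofReal_le_ofReal ?_).trans (ofReal_partitionEntropy_le_hKS hP)
  refine div_le_partitionEntropy (measurePreserving_concatMeasure hn) hP hn fun k => ?_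
  have hit := measurable_itinerary measurable_shf hP ((k + 1) * n)
  refine le_shannonEntropy_map_orbitAverage measurable_shf hn hit fun i hi => ?_
  have hshift := measurable_shf (S := S).iterate i
  calc k * shannonEntropy p
      = shannonEntropy ((Measure.infinitePi fun _ : ℕ => p).map (Finset.Icc 1 k).restrict) := by
        rw [Measure.infinitePi_map_restrict, shannonEntropy_prod_pi]
        simp
    _ ≤ _ := shannonEntropy_map_le_of_factorsThrough _
        ((hit.comp hshift).comp (measurable_concat n w)) (Finset.measurable_restrict _)
        (restrict_factorsThrough_itinerary hinj hi k)
    _ = _ := by rw [Measure.map_map (hit.comp hshift) (measurable_concat n w)]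

end ConcatenationEntropy

section LowerBound

variable {S ι : Type*} {T : S → S → Prop} {n : ℕ} {w : ι → ℕ → S} {a : S}

lemma integral_comp_eval_infinitePi [MeasurableSpace ι] [MeasurableSingletonClass ι] [Finite ι]
    (p : Measure ι) [IsProbabilityMeasure p] (u : ι → ℝ) (j : ℕ) :
    Integrable (fun ω : ℕ → ι => u (ω j)) (Measure.infinitePi fun _ => p) ∧
      ∫ ω : ℕ → ι, u (ω j) ∂(Measure.infinitePi fun _ => p) = ∫ k, u k ∂p := by
  have hj := measurePreserving_eval_infinitePi (fun _ : ℕ => p) j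
  refine ⟨hj.integrable_comp_of_integrable .of_finite, ?_⟩
  conv_rhs => rw [← hj.map_eq]
  exact (integral_map hj.aemeasurable Integrable.of_finite.aestronglyMeasurable).symm

namespace IsAlmostAdditiveBowen

variable {φ : ℕ → (ℕ → S) → ℝ} {C K : ℝ}

/-- The window of length `n` starting at position `i < n` of a concatenation covers the end of the
first word and the beginning of the second one. -/
lemma exists_add_le_iterate_shf_concat (H : IsAlmostAdditiveBowen T φ C K) {i : ℕ} (hi : i < n)
    (hw : ∀ k, w k ∈ shiftSpace T) (hw0 : ∀ k, w k 0 = a) (hwn : ∀ k, w k n = a) :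
    ∃ u v : ι → ℝ, (∀ k, φ n (w k) ≤ u k + v k + C) ∧
      ∀ ω, u (ω 1) + v (ω 0) ≤ φ n (shf^[i] (concat n w ω)) + 3 * C := by
  have hn : 0 < n := by omega
  have hmem (ω : ℕ → ι) : concat n w ω ∈ shiftSpace T := concat_mem_shiftSpace hn hw hw0 hwn ω
  have hbowen {m : ℕ} (hm : 0 < m) (hmn : m ≤ n) (ω : ℕ → ι) :
      φ m (w (ω 0)) ≤ φ m (concat n w ω) + C :=
    H.bowen m hm _ (hw _) _ (hmem ω) fun t ht => (concat_of_lt w ω (ht.trans_le hmn)).symm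
  rcases i.eq_zero_or_pos with rfl | hi0
  · refine ⟨0, fun k => φ n (w k), fun k => ?_, fun ω => ?_⟩
    · simpa using H.const_nonneg (hw k)
    · have hC := H.const_nonneg (hmem ω)
      simpa using (hbowen hn le_rfl ω).trans (by linarith)
  refine ⟨fun k => φ i (w k), fun k => φ (n - i) (shf^[i] (w k)), fun k => ?_, fun ω => ?_⟩
  · simpa [Nat.add_sub_cancel' hi.le] using H.le_add i (n - i) hi0 (by omega) (w k) (hw k)
  have hsplit := H.add_le (n - i) i (by omega) hi0 _ (iterate_shf_mem_shiftSpace (hmem ω) i)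
  rw [← Function.iterate_add_apply, Nat.sub_add_cancel hi.le, iterate_shf_concat hn] at hsplit
  have htail := hbowen hi0 hi.le (shf ω)
  have hhead := H.bowen (n - i) (by omega) _ (iterate_shf_mem_shiftSpace (hw (ω 0)) i) _
    (iterate_shf_mem_shiftSpace (hmem ω) i) fun t ht => by
      rw [iterate_shf_apply, iterate_shf_apply, concat_of_lt w ω (by omega)]
  change φ i (w (ω 1)) ≤ _ at htail
  linarith

variable [MeasurableSpace S] [MeasurableSpace ι] [MeasurableSingletonClass ι] [Finite ι]
  {p : Measure ι} [IsProbabilityMeasure p]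

lemma le_integral_concatMeasure (H : IsAlmostAdditiveBowen T φ C K)
    (hmeas : ∀ n, Measurable (φ n)) (hn : 0 < n) (hw : ∀ k, w k ∈ shiftSpace T)
    (hw0 : ∀ k, w k 0 = a) (hwn : ∀ k, w k n = a) :
    Integrable (φ n) (concatMeasure n w p) ∧
      ∫ k, φ n (w k) ∂p - 4 * C ≤ ∫ x, φ n x ∂(concatMeasure n w p) := by
  set m := Measure.infinitePi fun _ : ℕ => p
  have := isProbabilityMeasure_map_concat (n := n) (w := w) (p := p)
  refine le_integral_orbitAverage measurable_shf hn (hmeas n) fun i hi => ?_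
  obtain ⟨u, v, huv, hlower⟩ := H.exists_add_le_iterate_shf_concat hi hw hw0 hwn
  have hconcat := measurable_concat n w
  have hφ : Measurable fun x => φ n (shf^[i] x) := (hmeas n).comp (measurable_shf.iterate i)
  obtain ⟨hu, hu'⟩ := integral_comp_eval_infinitePi p u 1
  obtain ⟨hv, hv'⟩ := integral_comp_eval_infinitePi p v 0
  have hadd : Integrable (fun ω => u (ω 1) + v (ω 0)) m := hu.add hv
  have hsum : Integrable (fun ω => u (ω 1) + v (ω 0) - 3 * C) m :=
    hadd.sub (integrable_const _)
  have hint : Integrable (fun ω => φ n (shf^[i] (concat n w ω))) m :=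
    integrable_of_le_of_le (hφ.comp hconcat).aestronglyMeasurable
      (ae_of_all _ fun ω => sub_le_iff_le_add.2 (hlower ω))
      (ae_of_all _ fun ω => H.le_mul hn
        (iterate_shf_mem_shiftSpace (concat_mem_shiftSpace hn hw hw0 hwn ω) i))
      hsum (integrable_const _)
  rw [integrable_map_measure hφ.aestronglyMeasurable hconcat.aemeasurable,
    integral_map hconcat.aemeasurable hφ.aestronglyMeasurable]
  refine ⟨hint, ?_⟩
  calc ∫ k, φ n (w k) ∂p - 4 * C
      ≤ ∫ k, u k + v k + C ∂p - 4 * C :=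
        sub_le_sub_right (integral_mono .of_finite .of_finite huv) _
    _ = ∫ ω, u (ω 1) + v (ω 0) - 3 * C ∂m := by
        rw [integral_sub hadd (integrable_const _), integral_add hu hv, hu', hv',
          integral_add .of_finite .of_finite, integral_add .of_finite .of_finite]
        simp
        ring
    _ ≤ ∫ ω, φ n (shf^[i] (concat n w ω)) ∂m :=
        integral_mono hsum hint fun ω => sub_le_iff_le_add.2 (hlower ω)

end IsAlmostAdditiveBowen

/-- The points over which the partition function `Z_n(F, a)` sums. -/
abbrev PeriodicPoint (T : S → S → Prop) (n : ℕ) (a : S) :=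
  {x : ℕ → S // x ∈ shiftSpace T ∧ shf^[n] x = x ∧ x 0 = a}

lemma PeriodicPoint.periodic (x : PeriodicPoint T n a) : Function.Periodic x.1 n := fun i =>
  (iterate_shf_apply n x.1 i).symm.trans (congrFun x.2.2.1 i)

lemma PeriodicPoint.apply_self (x : PeriodicPoint T n a) : x.1 n = a := by
  simpa [x.2.2.2] using x.periodic 0

lemma PeriodicPoint.ext_of_lt (hn : 0 < n) {x y : PeriodicPoint T n a}
    (h : ∀ t < n, x.1 t = y.1 t) : x = y := by
  refine Subtype.ext (funext fun j => ?_)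
  rw [← x.periodic.map_mod_nat, ← y.periodic.map_mod_nat]
  exact h _ (Nat.mod_lt _ hn)

variable {f : ℕ → (ℕ → S) → ℝ} {C K : ℝ}

lemma exists_finset_exp_lt_sum (hn : 0 < n) (hpos : ∀ x ∈ shiftSpace T, 0 < f n x) {B : ℝ}
    (hB : (B : EReal) < ENNReal.log (ZFun T f n a) / ((n : ℝ) : EReal)) :
    ∃ s : Finset (PeriodicPoint T n a), Real.exp (n * B) < ∑ x ∈ s, f n x := by
  rw [← not_le, ereal_div_natCast_le_coe_iff hn, not_le, ← Real.log_exp (n * B),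
    ← ENNReal.log_ofReal_of_pos (Real.exp_pos _), ENNReal.log_lt_log_iff, ZFun,
    ENNReal.tsum_eq_iSup_sum, lt_iSup_iff] at hB
  obtain ⟨s, hs⟩ := hB
  rw [← ENNReal.ofReal_sum_of_nonneg fun x _ => (hpos x.1 x.2.1).le] at hs
  exact ⟨s, (ENNReal.ofReal_lt_ofReal_iff_of_nonneg (Real.exp_pos _).le).1 hs⟩

variable [MeasurableSpace S] [Countable S] [MeasurableSingletonClass S]

lemma exists_log_sum_div_le_hKS_add_lyap
    (H : IsAlmostAdditiveBowen T (fun n x => Real.log (f n x)) C K)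
    (hmeas : ∀ n, Measurable (f n)) (hn : 0 < n) (hpos : ∀ x ∈ shiftSpace T, 0 < f n x)
    {s : Finset (PeriodicPoint T n a)} (hs : s.Nonempty) :
    ∃ μ : Measure (ℕ → S), IsProbabilityMeasure μ ∧ MeasurePreserving shf μ μ ∧
      (∀ᵐ x ∂μ, x ∈ shiftSpace T) ∧ lyap μ f ≠ ⊥ ∧
      (((Real.log (∑ x ∈ s, f n x) - 5 * C) / n : ℝ) : EReal) ≤ hKS μ + lyap μ f := by
  have := hs.to_subtype
  let w (k : s) : ℕ → S := k.1.1
  have hw (k : s) : w k ∈ shiftSpace T := k.1.2.1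
  have hw0 (k : s) : w k 0 = a := k.1.2.2.2
  have hwn (k : s) : w k n = a := k.1.apply_self
  have hinj (k k' : s) (h : ∀ t < n, w k t = w k' t) : k = k' :=
    Subtype.ext (PeriodicPoint.ext_of_lt hn h)
  obtain ⟨p, hp, hgibbs⟩ :=
    exists_shannonEntropy_add_integral_eq_log_sum_exp fun k : s => Real.log (f n (w k))
  simp only [fun k => Real.exp_log (hpos _ (hw k))] at hgibbs
  rw [Finset.sum_coe_sort s fun x => f n x] at hgibbs
  have hprob := isProbabilityMeasure_concatMeasure (w := w) (p := p) hn
  have hσ := measurePreserving_concatMeasure (w := w) (p := p) hn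
  have hae := ae_mem_shiftSpace_concatMeasure (p := p) hn hw hw0 hwn
  obtain ⟨hint, hle⟩ := H.le_integral_concatMeasure (p := p) (fun n => (hmeas n).log) hn hw hw0 hwn
  have hlyap := H.le_lyap hmeas hσ hae hn hint
  have hent : ((shannonEntropy p / n : ℝ) : EReal) ≤ hKS (concatMeasure n w p) :=
    calc ((shannonEntropy p / n : ℝ) : EReal)
        ≤ (ENNReal.ofReal (shannonEntropy p / n) : EReal) :=
          (EReal.coe_le_coe_iff.2 (le_max_left _ 0)).trans_eq EReal.coe_ennreal_ofReal.symm
      _ ≤ _ := EReal.coe_ennreal_le_coe_ennreal_iff.2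
          (ofReal_shannonEntropy_div_le_hKS_concatMeasure hn hinj)
  refine ⟨_, hprob, hσ, hae, ((EReal.bot_lt_coe _).trans_le hlyap).ne', ?_⟩
  refine le_trans ?_ (add_le_add hent hlyap)
  rw [← EReal.coe_add, EReal.coe_le_coe_iff, ← add_div]
  gcongr
  linarith

lemma exists_le_hKS_add_lyap_of_lt_press
    (H : IsAlmostAdditiveBowen T (fun n x => Real.log (f n x)) C K)
    (hmeas : ∀ n, Measurable (f n)) (hpos : ∀ n, 0 < n → ∀ x ∈ shiftSpace T, 0 < f n x)
    {B : ℝ} (hB : (B : EReal) < press T f a) :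
    ∃ μ : Measure (ℕ → S), IsProbabilityMeasure μ ∧ MeasurePreserving shf μ μ ∧
      (∀ᵐ x ∂μ, x ∈ shiftSpace T) ∧ lyap μ f ≠ ⊥ ∧ (B : EReal) ≤ hKS μ + lyap μ f := by
  obtain ⟨B', hBB', hB'⟩ := EReal.lt_iff_exists_real_btwn.1 hB
  rw [EReal.coe_lt_coe_iff, ← sub_pos] at hBB'
  have hfreq := (frequently_lt_of_lt_limsup (by isBoundedDefault) hB').and_eventually
    ((eventually_gt_atTop 0).and (eventually_ge_atTop ⌈5 * C / (B' - B)⌉₊))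
  obtain ⟨n, hBn, hn, hnC⟩ := hfreq.exists
  rw [Nat.ceil_le, div_le_iff₀ hBB'] at hnC
  obtain ⟨s, hs⟩ := exists_finset_exp_lt_sum hn (hpos n hn) hBn
  have hs0 : s.Nonempty := Finset.nonempty_of_sum_ne_zero ((Real.exp_pos _).trans hs).ne'
  obtain ⟨μ, hμ, hσ, hae, hbot, hle⟩ :=
    exists_log_sum_div_le_hKS_add_lyap H hmeas hn (hpos n hn) hs0
  refine ⟨μ, hμ, hσ, hae, hbot, le_trans (EReal.coe_le_coe_iff.2 ?_) hle⟩
  have hlog := (Real.lt_log_iff_exp_lt ((Real.exp_pos _).trans hs)).2 hs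
  rw [le_div_iff₀ (by positivity)]
  linarith

end LowerBound

section CylinderApproximation

variable {κ : Type*} {X : κ → Type*} [∀ i, MeasurableSpace (X i)] {μ : Measure (∀ i, X i)}
  [IsFiniteMeasure μ]

lemma exists_mem_measurableCylinders_measure_symmDiff_lt {s : Set (∀ i, X i)}
    (hs : MeasurableSet s) {ε : ℝ≥0∞} (hε : 0 < ε) :
    ∃ t ∈ measurableCylinders X, μ (symmDiff t s) < ε :=
  exists_measure_symmDiff_lt_of_generateFrom_isSetRing isSetRing_measurableCylinders
    ⟨{Set.univ}, Set.countable_singleton _,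
      Set.singleton_subset_iff.2 (univ_mem_measurableCylinders X), by simp⟩
    generateFrom_measurableCylinders.symm hs hε

lemma exists_dependsOn_eqOn_compl {ι : Type*} [Finite ι] [MeasurableSpace ι]
    [MeasurableSingletonClass ι] {P : (∀ i, X i) → ι} (hP : Measurable P) {ε : ℝ}
    (hε : 0 < ε) :
    ∃ (γ : (∀ i, X i) → ι) (J : Finset κ) (D : Set (∀ i, X i)), DependsOn γ (J : Set κ) ∧
      MeasurableSet D ∧ μ.real D ≤ ε ∧ Set.EqOn γ P Dᶜ := by
  classical
  cases nonempty_fintype ι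
  rcases isEmpty_or_nonempty ι with hι | hι
  · exact ⟨P, ∅, ∅, fun x => isEmptyElim (P x), .empty, by simpa using hε.le, fun _ _ => rfl⟩
  have hcard : (0 : ℝ) < Fintype.card ι := by exact_mod_cast Fintype.card_pos
  choose t ht hμ using fun r : ι => exists_mem_measurableCylinders_measure_symmDiff_lt (μ := μ)
    (hP (measurableSet_singleton r)) (ENNReal.ofReal_pos.2 (div_pos hε hcard))
  choose J A _ htA using fun r => (mem_measurableCylinders _).1 (ht r)
  refine ⟨fun x => Classical.epsilon fun r => x ∈ t r, Finset.univ.biUnion J,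
    ⋃ r, symmDiff (t r) (P ⁻¹' {r}), fun x y hxy => ?_, ?_, ?_, fun x hx => ?_⟩
  · have hmem (r : ι) : x ∈ t r ↔ y ∈ t r := by
      rw [htA, mem_cylinder, mem_cylinder, (J r).dependsOn_restrict fun i hi => hxy i ?_]
      exact Finset.mem_coe.2 (Finset.mem_biUnion.2 ⟨r, Finset.mem_univ r, hi⟩)
    simp only [hmem]
  · exact MeasurableSet.iUnion fun r =>
      (MeasurableSet.of_mem_measurableCylinders (ht r)).symmDiff (hP (measurableSet_singleton r))
  · calc μ.real (⋃ r, symmDiff (t r) (P ⁻¹' {r}))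
        ≤ ∑ r, μ.real (symmDiff (t r) (P ⁻¹' {r})) := measureReal_iUnion_fintype_le _
      _ ≤ ∑ _r : ι, ε / Fintype.card ι := Finset.sum_le_sum fun r _ =>
          ENNReal.toReal_le_of_le_ofReal (div_pos hε hcard).le (hμ r).le
      _ = ε := by simp [mul_div_cancel₀ _ hcard.ne']
  · have hmem (r : ι) : x ∈ t r ↔ r = P x := by
      have hr : x ∉ symmDiff (t r) (P ⁻¹' {r}) := fun h => hx (Set.mem_iUnion.2 ⟨r, h⟩)
      rw [Set.mem_symmDiff, Set.mem_preimage, Set.mem_singleton_iff] at hr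
      tauto
    simp only [hmem, Classical.epsilon_singleton]

end CylinderApproximation

section Tightness

lemma exists_finset_measureReal_notMem_le {X S : Type*} [Countable S] [MeasurableSpace X]
    [MeasurableSpace S] [DiscreteMeasurableSpace S] {μ : Measure X} [IsFiniteMeasure μ]
    {g : X → S} (hg : Measurable g) {ε : ℝ} (hε : 0 < ε) :
    ∃ F : Finset S, μ.real {x | g x ∉ F} ≤ ε := by
  have hlim := tendsto_measure_iInter_atTop (μ := μ) (s := fun F : Finset S => {x | g x ∉ F})
    (fun F => (hg (.of_discrete (s := {s | s ∉ F}))).nullMeasurableSet)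
    (fun F F' hFF' x hx hxF => hx (hFF' hxF)) ⟨∅, measure_ne_top _ _⟩
  have hinter : ⋂ F : Finset S, {x | g x ∉ F} = ∅ :=
    Set.eq_empty_of_forall_notMem fun x hx => Set.mem_iInter.1 hx {g x} (by simp)
  rw [hinter, measure_empty] at hlim
  obtain ⟨F, hF⟩ := (hlim.eventually_le_const (ENNReal.ofReal_pos.2 hε)).exists
  exact ⟨F, ENNReal.toReal_le_of_le_ofReal hε.le hF⟩

end Tightness

section Coding

/-- The transition probability from `d` to `c` of a noisy channel which replaces the transmitted
letter, with probability `η`, by a uniformly distributed one. The mass `η / card ι` which this gives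
to `c = d` is dropped, so that the weights add up to at most one. -/
def noiseWeight {ι : Type*} [Fintype ι] [DecidableEq ι] (η : ℝ) (d c : ι) : ℝ :=
  if c = d then 1 - η else η / Fintype.card ι

variable {ι : Type*} [Fintype ι] [DecidableEq ι] {η : ℝ}

lemma noiseWeight_pos (h0 : 0 < η) (h1 : η < 1) (d c : ι) : 0 < noiseWeight η d c := by
  have : 0 < Fintype.card ι := Fintype.card_pos_iff.2 ⟨d⟩
  unfold noiseWeight
  split_ifs
  · linarith
  · positivity

lemma sum_noiseWeight_le_one (h0 : 0 < η) (d : ι) : ∑ c, noiseWeight η d c ≤ 1 := by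
  have hcard : (Fintype.card ι : ℝ) ≠ 0 := by exact_mod_cast (Fintype.card_pos_iff.2 ⟨d⟩).ne'
  calc ∑ c, noiseWeight η d c
      ≤ ∑ c, ((if c = d then 1 - η else 0) + η / Fintype.card ι) :=
        Finset.sum_le_sum fun c _ => by
          have : 0 ≤ η / Fintype.card ι := by positivity
          unfold noiseWeight
          split_ifs <;> linarith
    _ = 1 := by
        rw [Finset.sum_add_distrib]
        simp [mul_div_cancel₀ _ hcard]

lemma neg_log_noiseWeight_le (h0 : 0 < η) (h1 : η < 1) (d c : ι) :
    -Real.log (noiseWeight η d c) ≤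
      -Real.log (1 - η) + if c = d then 0 else Real.log (Fintype.card ι / η) := by
  unfold noiseWeight
  split_ifs
  · simp
  · rw [← Real.log_inv, inv_div]
    linarith [Real.log_nonpos (by linarith : 0 ≤ 1 - η) (by linarith)]

lemma exists_noise_cost_le {m δ : ℝ} (hm : 0 < m) (hδ : 0 < δ) :
    ∃ η, 0 < η ∧ η < 1 ∧ -Real.log (1 - η) + η * Real.log (m / η) ≤ δ := by
  have hlog : ContinuousAt (fun η : ℝ => Real.log (1 - η)) 0 :=
    ContinuousAt.log (by fun_prop) (by norm_num)
  have hcont : ContinuousAt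
      (fun η : ℝ => -Real.log (1 - η) + (η * Real.log m + Real.negMulLog η)) 0 :=
    hlog.neg.add ((continuousAt_id.mul_const _).add Real.continuous_negMulLog.continuousAt)
  have hsmall := (hcont.eventually_lt_const (by simpa using hδ)).and (eventually_lt_nhds one_pos)
  obtain ⟨η, ⟨hle, h1⟩, h0⟩ :=
    ((hsmall.filter_mono nhdsWithin_le_nhds).and (self_mem_nhdsWithin (s := Set.Ioi 0))).exists
  refine ⟨η, h0, h1, le_trans (le_of_eq ?_) hle.le⟩
  rw [Real.log_div hm.ne' (ne_of_gt h0), Real.negMulLog]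
  ring

end Coding

section Mixture

variable {β Z : Type*} [Fintype β] {u : Z → ℝ} {w : Z → β → ℝ}

lemma sum_tsum_ofReal_mul_le_one (hu : ∀ z, 0 ≤ u z) (hw : ∀ z c, 0 ≤ w z c)
    (hu1 : ∑' z, ENNReal.ofReal (u z) ≤ 1) (hw1 : ∀ z, ∑ c, w z c ≤ 1) :
    ∑ c, ∑' z, ENNReal.ofReal (u z * w z c) ≤ 1 :=
  calc ∑ c, ∑' z, ENNReal.ofReal (u z * w z c)
      = ∑' z, ∑ c, ENNReal.ofReal (u z * w z c) :=
        (Summable.tsum_finsetSum fun _ _ => ENNReal.summable).symm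
    _ ≤ ∑' z, ENNReal.ofReal (u z) := ENNReal.tsum_le_tsum fun z => by
        rw [← ENNReal.ofReal_sum_of_nonneg fun c _ => mul_nonneg (hu z) (hw z c), ← Finset.mul_sum]
        exact ENNReal.ofReal_le_ofReal (mul_le_of_le_one_right (hu z) (hw1 z))
    _ ≤ 1 := hu1

/-- The code `q` is the average of the mixture `∑ z, u z * w z` and the uniform distribution. -/
lemma exists_neg_log_le_of_mixture [Nonempty β] (hu : ∀ z, 0 < u z) (hw : ∀ z c, 0 < w z c)
    (hu1 : ∑' z, ENNReal.ofReal (u z) ≤ 1) (hw1 : ∀ z, ∑ c, w z c ≤ 1) :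
    ∃ q : β → ℝ, (∀ c, 0 < q c) ∧ ∑ c, q c ≤ 1 ∧
      (∀ c, -Real.log (q c) ≤ Real.log 2 + Real.log (Fintype.card β)) ∧
      ∀ z c, -Real.log (q c) ≤ Real.log 2 - Real.log (u z) - Real.log (w z c) := by
  let Q (c : β) : ℝ≥0∞ := ∑' z, ENNReal.ofReal (u z * w z c)
  have hQ : ∑ c, Q c ≤ 1 :=
    sum_tsum_ofReal_mul_le_one (fun z => (hu z).le) (fun z c => (hw z c).le) hu1 hw1
  have hQtop (c : β) : Q c ≠ ⊤ := ne_top_of_le_ne_top ENNReal.one_ne_top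
    ((Finset.single_le_sum (fun _ _ => zero_le) (Finset.mem_univ c)).trans hQ)
  have hQ1 : ∑ c, (Q c).toReal ≤ 1 := by
    rw [← ENNReal.toReal_sum fun c _ => hQtop c]
    exact ENNReal.toReal_le_of_le_ofReal zero_le_one (by simpa using hQ)
  have hcard : (0 : ℝ) < Fintype.card β := by exact_mod_cast Fintype.card_pos
  have hneg_log {c : β} {v : ℝ} (hv : 0 < v)
      (hle : v ≤ (Q c).toReal + (Fintype.card β : ℝ)⁻¹) :
      -Real.log (((Q c).toReal + (Fintype.card β : ℝ)⁻¹) / 2) ≤ Real.log 2 - Real.log v := by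
    rw [Real.log_div (hv.trans_le hle).ne' two_ne_zero]
    linarith [Real.log_le_log hv hle]
  refine ⟨fun c => ((Q c).toReal + (Fintype.card β : ℝ)⁻¹) / 2, fun c => ?_, ?_, fun c => ?_,
    fun z c => ?_⟩
  · positivity
  · rw [← Finset.sum_div, Finset.sum_add_distrib, Finset.sum_const, Finset.card_univ,
      nsmul_eq_mul, mul_inv_cancel₀ hcard.ne']
    linarith
  · simpa using hneg_log (inv_pos.2 hcard) (le_add_of_nonneg_left ENNReal.toReal_nonneg)
  · have hle : u z * w z c ≤ (Q c).toReal := (ENNReal.ofReal_le_iff_le_toReal (hQtop c)).1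
      (ENNReal.le_tsum (f := fun z => ENNReal.ofReal (u z * w z c)) z)
    have := hneg_log (mul_pos (hu z) (hw z c)) (hle.trans (le_add_of_nonneg_right (by positivity)))
    rwa [Real.log_mul (hu z).ne' (hw z c).ne', ← sub_sub] at this

end Mixture

section Shadowing

variable {S : Type*} {T : S → S → Prop} {n : ℕ} {a : S}

/-- The sequence which follows `x` up to time `n` and then `y` from its beginning. -/
def splice (n : ℕ) (x y : ℕ → S) : ℕ → S := fun i => if i < n then x i else y (i - n)

lemma splice_of_lt (x y : ℕ → S) {i : ℕ} (hi : i < n) : splice n x y i = x i := if_pos hi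

lemma splice_add (n : ℕ) (x y : ℕ → S) (i : ℕ) : splice n x y (n + i) = y i := by
  simp [splice]

lemma splice_mem_shiftSpace {x y : ℕ → S} (hx : x ∈ shiftSpace T) (hy : y ∈ shiftSpace T)
    (hxy : x n = y 0) : splice n x y ∈ shiftSpace T := by
  intro i
  obtain hi | rfl | hi := lt_trichotomy (i + 1) n
  · rw [splice_of_lt x y hi, splice_of_lt x y (by omega)]
    exact hx i
  · rw [splice_of_lt x y i.lt_succ_self, (splice_add (i + 1) x y 0).trans hxy.symm]
    exact hx i
  · obtain ⟨j, rfl⟩ := Nat.exists_eq_add_of_le (Nat.lt_succ_iff.1 hi)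
    rw [add_assoc, splice_add, splice_add]
    exact hy j

lemma exists_periodicPoint_eq_of_lt (hn : 0 < n) {x : ℕ → S} (hx : x ∈ shiftSpace T)
    (hx0 : x 0 = a) (hxn : x n = a) : ∃ z : PeriodicPoint T n a, ∀ i < n, z.1 i = x i := by
  have heq (i : ℕ) (hi : i < n) : concat n (fun _ : Unit => x) default i = x i :=
    concat_of_lt _ _ hi
  exact ⟨⟨_, concat_mem_shiftSpace hn (fun _ => hx) (fun _ => hx0) (fun _ => hxn) default,
    iterate_shf_concat hn _ _, (heq 0 hn).trans hx0⟩, heq⟩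

lemma IsAlmostAdditiveBowen.exists_periodicPoint_shadowing {φ : ℕ → (ℕ → S) → ℝ} {C K : ℝ}
    (H : IsAlmostAdditiveBowen T φ C K) {l r : ℕ} (hl : 0 < l) (hn : 0 < n) (hr : 0 < r)
    {u x v : ℕ → S} (hu : u ∈ shiftSpace T) (hx : x ∈ shiftSpace T) (hv : v ∈ shiftSpace T)
    (hu0 : u 0 = a) (hux : u l = x 0) (hxv : x n = v 0) (hva : v r = a) :
    ∃ z : PeriodicPoint T (l + (n + r)) a, (∀ i < n, z.1 (l + i) = x i) ∧
      φ l u + φ n x + φ r v ≤ φ (l + (n + r)) z.1 + 5 * C := by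
  have hux' : u l = splice n x v 0 := hux.trans (splice_of_lt x v hn).symm
  obtain ⟨z, hz⟩ := exists_periodicPoint_eq_of_lt (n := l + (n + r)) (by omega)
    (splice_mem_shiftSpace hu (splice_mem_shiftSpace hx hv hxv) hux')
    ((splice_of_lt _ _ hl).trans hu0) (by rw [splice_add, splice_add, hva])
  have hzu (i : ℕ) (hi : i < l) : z.1 i = u i := by rw [hz i (by omega), splice_of_lt _ _ hi]
  have hzx (i : ℕ) (hi : i < n) : z.1 (l + i) = x i := by
    rw [hz _ (by omega), splice_add, splice_of_lt _ _ hi]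
  have hzv (i : ℕ) (hi : i < r) : z.1 (l + (n + i)) = v i := by
    rw [hz _ (by omega), splice_add, splice_add]
  refine ⟨z, hzx, ?_⟩
  have hzl := iterate_shf_mem_shiftSpace z.2.1 l
  have hsplit := H.add_le l (n + r) hl (by omega) z.1 z.2.1
  have hsplit' := H.add_le n r hn hr _ hzl
  have hbowen_u := H.bowen l hl u hu z.1 z.2.1 fun i hi => (hzu i hi).symm
  have hbowen_x := H.bowen n hn x hx _ hzl fun i hi => by
    rw [iterate_shf_apply, add_comm i l, hzx i hi]
  have hbowen_v := H.bowen r hr v hv _ (iterate_shf_mem_shiftSpace hzl n) fun i hi => by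
    rw [iterate_shf_apply, iterate_shf_apply, add_comm i n, add_comm (n + i) l, hzv i hi]
  linarith

end Shadowing

section Code

lemma itinerary_eq_of_dependsOn {ι S : Type*} {γ : (ℕ → S) → ι} {k n : ℕ}
    (hγ : DependsOn γ (Set.Iio k))
    {x y : ℕ → S} (hxy : ∀ i < n + k, x i = y i) : itinerary shf γ n x = itinerary shf γ n y := by
  ext i
  refine hγ fun j hj => ?_
  have := Set.mem_Iio.1 hj
  rw [iterate_shf_apply, iterate_shf_apply, hxy _ (by omega)]

lemma tsum_ofReal_mul_le_one_of_ZFun_le {S : Type*} {T : S → S → Prop}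
    {f : ℕ → (ℕ → S) → ℝ} {a : S} {B : ℝ} {n : ℕ}
    (hZ : ZFun T f n a ≤ ENNReal.ofReal (Real.exp (n * B))) :
    ∑' z : PeriodicPoint T n a, ENNReal.ofReal (Real.exp (-(n * B)) * f n z.1) ≤ 1 := by
  simp_rw [ENNReal.ofReal_mul (Real.exp_pos _).le, ENNReal.tsum_mul_left]
  exact (mul_le_mul_right hZ _).trans_eq (by
    simp [← ENNReal.ofReal_mul (Real.exp_pos _).le, ← Real.exp_add])

lemma tsum_sigma_ofReal_inv_card_mul_le_one {Θ : Type*} [Fintype Θ] {Z : Θ → Type*}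
    {u : ∀ θ, Z θ → ℝ} (hu : ∀ θ, ∑' z, ENNReal.ofReal (u θ z) ≤ 1) :
    ∑' z : Σ θ, Z θ, ENNReal.ofReal ((Fintype.card Θ : ℝ)⁻¹ * u z.1 z.2) ≤ 1 := by
  have hcard : 0 ≤ (Fintype.card Θ : ℝ)⁻¹ := by positivity
  calc ∑' z : Σ θ, Z θ, ENNReal.ofReal ((Fintype.card Θ : ℝ)⁻¹ * u z.1 z.2)
      = ∑ θ, ENNReal.ofReal (Fintype.card Θ : ℝ)⁻¹ * ∑' z, ENNReal.ofReal (u θ z) := by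
        simp_rw [ENNReal.tsum_sigma', tsum_fintype, ENNReal.ofReal_mul hcard, ENNReal.tsum_mul_left]
    _ ≤ ∑ _θ : Θ, ENNReal.ofReal (Fintype.card Θ : ℝ)⁻¹ :=
        Finset.sum_le_sum fun θ _ => mul_le_of_le_one_right' (hu θ)
    _ ≤ 1 := by
        rw [← ENNReal.ofReal_sum_of_nonneg fun _ _ => hcard, Finset.sum_const, Finset.card_univ,
          nsmul_eq_mul]
        exact ENNReal.ofReal_le_one.2 mul_inv_le_one

variable {ι : Type*} [Fintype ι] [DecidableEq ι] {η : ℝ} {n : ℕ}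

/-- The probability that a word `d` is received as `c` when its letters are sent independently
through the noisy channel `noiseWeight η`. -/
def wordWeight (η : ℝ) (d c : Fin n → ι) : ℝ := ∏ i, noiseWeight η (d i) (c i)

lemma wordWeight_pos (h0 : 0 < η) (h1 : η < 1) (d c : Fin n → ι) : 0 < wordWeight η d c :=
  Finset.prod_pos fun i _ => noiseWeight_pos h0 h1 (d i) (c i)

lemma sum_wordWeight_le_one (h0 : 0 < η) (h1 : η < 1) (d : Fin n → ι) :
    ∑ c, wordWeight η d c ≤ 1 := by
  have hprod : ∑ c, wordWeight η d c = ∏ i, ∑ c, noiseWeight η (d i) c := by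
    rw [Finset.prod_univ_sum, Fintype.piFinset_univ]
    rfl
  rw [hprod]
  exact Finset.prod_le_one
    (fun i _ => Finset.sum_nonneg fun c _ => (noiseWeight_pos h0 h1 (d i) c).le)
    fun i _ => sum_noiseWeight_le_one h0 (d i)

lemma wordWeight_le_one (h0 : 0 < η) (h1 : η < 1) (d c : Fin n → ι) : wordWeight η d c ≤ 1 :=
  (Finset.single_le_sum (fun c' _ => (wordWeight_pos h0 h1 d c').le) (Finset.mem_univ c)).trans
    (sum_wordWeight_le_one h0 h1 d)

lemma neg_log_wordWeight_le (h0 : 0 < η) (h1 : η < 1) (d c : Fin n → ι) :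
    -Real.log (wordWeight η d c) ≤
      ∑ i, (-Real.log (1 - η) + if c i = d i then 0 else Real.log (Fintype.card ι / η)) := by
  rw [wordWeight, Real.log_prod fun i _ => (noiseWeight_pos h0 h1 (d i) (c i)).ne',
    ← Finset.sum_neg_distrib]
  exact Finset.sum_le_sum fun i _ => neg_log_noiseWeight_le h0 h1 (d i) (c i)

variable {S : Type*} {T : S → S → Prop} {f : ℕ → (ℕ → S) → ℝ} {a : S}
  {B : ℝ}

lemma exists_code_of_ZFun_le [Nonempty ι] (h0 : 0 < η) (h1 : η < 1) {Θ : Type*} [Fintype Θ]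
    {p : Θ → ℕ} (hpos : ∀ θ, ∀ x ∈ shiftSpace T, 0 < f (p θ) x)
    (hZ : ∀ θ, ZFun T f (p θ) a ≤ ENNReal.ofReal (Real.exp (p θ * B))) (γ : (ℕ → S) → ι)
    (l : Θ → ℕ) (n : ℕ) :
    ∃ q : (Fin n → ι) → ℝ, (∀ c, 0 < q c) ∧ ∑ c, q c ≤ 1 ∧
      (∀ c, -Real.log (q c) ≤ Real.log 2 + n * Real.log (Fintype.card ι)) ∧
      ∀ θ (z : PeriodicPoint T (p θ) a) c, Real.log (f (p θ) z.1) - Real.log (q c) ≤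
        p θ * B + (Real.log 2 + Real.log (Fintype.card Θ)) -
          Real.log (wordWeight η (itinerary shf γ n (shf^[l θ] z.1)) c) := by
  let u (z : Σ θ, PeriodicPoint T (p θ) a) : ℝ :=
    (Fintype.card Θ : ℝ)⁻¹ * (Real.exp (-(p z.1 * B)) * f (p z.1) z.2.1)
  have hcard (θ : Θ) : (0 : ℝ) < Fintype.card Θ := by
    exact_mod_cast Fintype.card_pos_iff.2 ⟨θ⟩
  have hu (z) : 0 < u z :=
    mul_pos (inv_pos.2 (hcard z.1)) (mul_pos (Real.exp_pos _) (hpos z.1 _ z.2.2.1))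
  have hu1 : ∑' z, ENNReal.ofReal (u z) ≤ 1 :=
    tsum_sigma_ofReal_inv_card_mul_le_one fun θ => tsum_ofReal_mul_le_one_of_ZFun_le (hZ θ)
  obtain ⟨q, hq0, hq1, hq, hqu⟩ := exists_neg_log_le_of_mixture hu
    (fun z c => wordWeight_pos h0 h1 (itinerary shf γ n (shf^[l z.1] z.2.1)) c) hu1
    fun z => sum_wordWeight_le_one h0 h1 _
  refine ⟨q, hq0, hq1, fun c => by simpa using hq c, fun θ z c => ?_⟩
  have hlog : Real.log (u ⟨θ, z⟩) =
      Real.log (f (p θ) z.1) - p θ * B - Real.log (Fintype.card Θ) := by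
    rw [Real.log_mul (inv_pos.2 (hcard θ)).ne' (mul_pos (Real.exp_pos _) (hpos θ _ z.2.1)).ne',
      Real.log_mul (Real.exp_pos _).ne' (hpos θ _ z.2.1).ne', Real.log_inv, Real.log_exp]
    ring
  linarith [hqu ⟨θ, z⟩ c]

lemma IsAlmostAdditiveBowen.exists_const_exists_code [Nonempty ι] {C K : ℝ}
    (H : IsAlmostAdditiveBowen T (fun n x => Real.log (f n x)) C K)
    (hpos : ∀ n, 0 < n → ∀ x ∈ shiftSpace T, 0 < f n x)
    (hirr : ∀ a b : S, ∃ n, 0 < n ∧ ∃ x ∈ shiftSpace T, x 0 = a ∧ x n = b)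
    (hB : ∀ᶠ n in atTop, ZFun T f n a ≤ ENNReal.ofReal (Real.exp (n * B)))
    (h0 : 0 < η) (h1 : η < 1) {γ : (ℕ → S) → ι} {k : ℕ} (hγ : DependsOn γ (Set.Iio k))
    (F : Finset S) :
    ∃ A : ℝ, ∀ᶠ n in atTop, ∃ q : (Fin n → ι) → ℝ, (∀ c, 0 < q c) ∧ ∑ c, q c ≤ 1 ∧
      (∀ c, -Real.log (q c) ≤ A + n * Real.log (Fintype.card ι)) ∧
      ∀ x ∈ shiftSpace T, x 0 ∈ F → x (n + k) ∈ F → ∀ c,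
        Real.log (f (n + k) x) - Real.log (q c) ≤ (n + k : ℕ) * B + A -
          Real.log (wordWeight η (itinerary shf γ n x) c) := by
  choose l hl u hu hu0 hul using fun θ : F × F => hirr a θ.1
  choose r hr v hv hv0 hvr using fun θ : F × F => hirr θ.2 a
  obtain ⟨A, hA⟩ := Finite.exists_le fun θ : F × F => (l θ + r θ) * B + 5 * C -
    Real.log (f (l θ) (u θ)) - Real.log (f (r θ) (v θ))
  have hZ : ∀ᶠ n in atTop, ∀ θ : F × F, ZFun T f (l θ + (n + k + r θ)) a ≤
      ENNReal.ofReal (Real.exp ((l θ + (n + k + r θ) : ℕ) * B)) := by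
    refine eventually_all.2 fun θ => ?_
    have hlim : Tendsto (fun n => l θ + (n + k + r θ)) atTop atTop :=
      tendsto_atTop_mono (fun n => show n ≤ _ by omega) tendsto_id
    exact hlim.eventually hB
  refine ⟨max A 0 + (Real.log 2 + Real.log (Fintype.card (F × F))), ?_⟩
  filter_upwards [hZ, eventually_gt_atTop 0] with n hZn hn
  obtain ⟨q, hq0, hq1, hq, hqz⟩ := exists_code_of_ZFun_le h0 h1
    (fun θ => hpos _ (by have := hl θ; omega)) hZn γ l n
  refine ⟨q, hq0, hq1, fun c => ?_, fun x hx hx0 hxn c => ?_⟩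
  · have : 0 ≤ Real.log (Fintype.card (F × F)) := Real.log_natCast_nonneg _
    linarith [hq c, le_max_right A 0]
  · let θ : F × F := (⟨x 0, hx0⟩, ⟨x (n + k), hxn⟩)
    obtain ⟨z, hzx, hz⟩ := H.exists_periodicPoint_shadowing (hl θ) (by omega : 0 < n + k) (hr θ)
      (hu θ) hx (hv θ) (hu0 θ) (hul θ) (hv0 θ).symm (hvr θ)
    have hit : itinerary shf γ n (shf^[l θ] z.1) = itinerary shf γ n x :=
      itinerary_eq_of_dependsOn hγ fun i hi => by rw [iterate_shf_apply, add_comm i (l θ), hzx i hi]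
    have hcode := hqz θ z c
    rw [hit] at hcode
    push_cast at hcode ⊢
    linarith [hA θ, le_max_left A 0]

end Code

section UpperBound

lemma shannonEntropy_map_add_integral_le {X ι : Type*} [MeasurableSpace X] [Fintype ι]
    [MeasurableSpace ι] [MeasurableSingletonClass ι] {μ : Measure X} [IsProbabilityMeasure μ]
    {Q : X → ι} (hQ : Measurable Q) {q : ι → ℝ}
    (hq0 : ∀ c, 0 < q c) (hq1 : ∑ c, q c ≤ 1) {g ψ : X → ℝ} (hg : Integrable g μ)
    (hψ : Integrable ψ μ) (hle : ∀ᵐ x ∂μ, g x - Real.log (q (Q x)) ≤ ψ x) :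
    shannonEntropy (μ.map Q) + ∫ x, g x ∂μ ≤ ∫ x, ψ x ∂μ := by
  have := Measure.isProbabilityMeasure_map (μ := μ) hQ.aemeasurable
  have hq := integrable_comp_of_finite μ hQ fun c => Real.log (q c)
  have hent : shannonEntropy (μ.map Q) ≤ -∫ x, Real.log (q (Q x)) ∂μ := by
    refine (shannonEntropy_le_integral_neg_log _ (fun c => (hq0 c).le) (ae_of_all _ hq0)
      hq1).trans_eq ?_
    rw [integral_map hQ.aemeasurable Integrable.of_finite.aestronglyMeasurable, integral_neg]
  have hmono := integral_mono_ae (hg.sub hq) hψ hle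
  rw [integral_sub' hg hq] at hmono
  linarith

lemma integrable_and_integral_birkhoffSum {X : Type*} [MeasurableSpace X] {μ : Measure X}
    {τ : X → X} (hτ : MeasurePreserving τ μ μ) {g : X → ℝ}
    (hg : Integrable g μ) (n : ℕ) :
    Integrable (birkhoffSum τ g n) μ ∧ ∫ x, birkhoffSum τ g n x ∂μ = n * ∫ x, g x ∂μ := by
  have hint (i : ℕ) : Integrable (fun x => g (τ^[i] x)) μ :=
    (hτ.iterate i).integrable_comp_of_integrable hg
  have hshift (i : ℕ) : ∫ x, g (τ^[i] x) ∂μ = ∫ x, g x ∂μ := by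
    have hi := hτ.iterate i
    rw [← integral_map hi.aemeasurable (f := g) (hi.map_eq.symm ▸ hg.aestronglyMeasurable),
      hi.map_eq]
  refine ⟨integrable_finsetSum _ fun i _ => hint i, ?_⟩
  simp [birkhoffSum, integral_finsetSum _ fun i _ => hint i, hshift]

lemma integrable_and_integral_birkhoffSum_const_add_indicator {X : Type*} [MeasurableSpace X]
    {μ : Measure X} [IsProbabilityMeasure μ] {τ : X → X} (hτ : MeasurePreserving τ μ μ) {D : Set X}
    (hD : MeasurableSet D) (b c : ℝ) (n : ℕ) :
    Integrable (birkhoffSum τ (fun y => b + D.indicator (fun _ => c) y) n) μ ∧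
      ∫ x, birkhoffSum τ (fun y => b + D.indicator (fun _ => c) y) n x ∂μ =
        n * (b + μ.real D * c) := by
  have hDc : Integrable (D.indicator fun _ => c) μ := (integrable_const c).indicator hD
  obtain ⟨hint, heq⟩ :=
    integrable_and_integral_birkhoffSum hτ ((integrable_const b).add hDc) n
  refine ⟨hint, heq.trans ?_⟩
  rw [integral_add' (integrable_const b) hDc, integral_indicator_const _ hD]
  simp

lemma measureReal_union_preimage_iterate_le {X : Type*} [MeasurableSpace X] {μ : Measure X}
    [IsFiniteMeasure μ] {τ : X → X} (hτ : MeasurePreserving τ μ μ) {s : Set X}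
    (hs : MeasurableSet s) (n : ℕ) : μ.real (s ∪ τ^[n] ⁻¹' s) ≤ 2 * μ.real s := by
  refine (measureReal_union_le _ _).trans_eq ?_
  rw [(hτ.iterate n).measureReal_preimage hs.nullMeasurableSet, two_mul]

lemma log_card_div_nonneg {ι : Type*} [Fintype ι] [Nonempty ι] {η : ℝ} (h0 : 0 < η)
    (h1 : η ≤ 1) : 0 ≤ Real.log (Fintype.card ι / η) := by
  have hcard : (1 : ℝ) ≤ Fintype.card ι := by exact_mod_cast Fintype.card_pos (α := ι)
  exact Real.log_nonneg ((one_le_div h0).2 (h1.trans hcard))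

lemma neg_log_wordWeight_itinerary_le {X ι : Type*} [Fintype ι] [DecidableEq ι] {τ : X → X}
    {η : ℝ} (h0 : 0 < η) (h1 : η < 1) {γ P : X → ι} {D : Set X}
    (hγ : Set.EqOn γ P Dᶜ) (n : ℕ) (x : X) :
    -Real.log (wordWeight η (itinerary τ γ n x) (itinerary τ P n x)) ≤
      birkhoffSum τ (fun y => -Real.log (1 - η) +
        D.indicator (fun _ => Real.log (Fintype.card ι / η)) y) n x := by
  refine (neg_log_wordWeight_le h0 h1 _ _).trans ?_
  rw [birkhoffSum, Finset.sum_range]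
  refine Finset.sum_le_sum fun i _ => add_le_add_right ?_ _
  have : Nonempty ι := ⟨P x⟩
  have hlog : 0 ≤ Real.log (Fintype.card ι / η) := log_card_div_nonneg h0 h1.le
  by_cases hD : τ^[i] x ∈ D
  · rw [Set.indicator_of_mem hD]
    split_ifs <;> linarith
  · have hi : itinerary τ P n x i = itinerary τ γ n x i := (hγ hD).symm
    rw [Set.indicator_of_notMem hD, if_pos hi]

variable {S : Type*} [Countable S] [MeasurableSpace S] [MeasurableSingletonClass S]
  {T : S → S → Prop} {f : ℕ → (ℕ → S) → ℝ} {C K : ℝ} {a : S} {B : ℝ} {μ : Measure (ℕ → S)}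
  [IsProbabilityMeasure μ] {ι : Type*} [Fintype ι] [MeasurableSpace ι] [MeasurableSingletonClass ι]
  {P : (ℕ → S) → ι}

lemma IsAlmostAdditiveBowen.exists_entropy_add_integral_le_of_eqOn
    (H : IsAlmostAdditiveBowen T (fun n x => Real.log (f n x)) C K)
    (hpos : ∀ n, 0 < n → ∀ x ∈ shiftSpace T, 0 < f n x)
    (hirr : ∀ a b : S, ∃ n, 0 < n ∧ ∃ x ∈ shiftSpace T, x 0 = a ∧ x n = b)
    (hB : ∀ᶠ n in atTop, ZFun T f n a ≤ ENNReal.ofReal (Real.exp (n * B)))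
    (hσ : MeasurePreserving shf μ μ) (hμ : ∀ᵐ x ∂μ, x ∈ shiftSpace T) (hP : Measurable P)
    {η : ℝ} (h0 : 0 < η) (h1 : η < 1) {γ : (ℕ → S) → ι} {k : ℕ} (hγ : DependsOn γ (Set.Iio k))
    {D : Set (ℕ → S)} (hD : MeasurableSet D) (hγP : Set.EqOn γ P Dᶜ) (F : Finset S) :
    ∃ A : ℝ, ∀ᶠ n in atTop, Integrable (fun x => Real.log (f (n + k) x)) μ →
      shannonEntropy (μ.map (itinerary shf P n)) + ∫ x, Real.log (f (n + k) x) ∂μ ≤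
        (n + k : ℕ) * B + A +
          n * (-Real.log (1 - η) + μ.real D * Real.log (Fintype.card ι / η)) +
          2 * μ.real {x | x 0 ∉ F} *
            ((n + k : ℕ) * (|K| + C + Real.log (Fintype.card ι) + |B|)) := by
  classical
  have hι : Nonempty ι := hμ.exists.nonempty.map P
  obtain ⟨A, hA⟩ := H.exists_const_exists_code hpos hirr hB h0 h1 hγ F
  refine ⟨A, ?_⟩
  filter_upwards [hA, eventually_gt_atTop 0] with n ⟨q, hq0, hq1, hqu, hqx⟩ hn hint
  let E : ℝ := (n + k : ℕ) * (|K| + C + Real.log (Fintype.card ι) + |B|)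
  have hE : 0 ≤ E := by
    have hC := H.const_nonneg hμ.exists.choose_spec
    have := Real.log_natCast_nonneg (Fintype.card ι)
    positivity
  have hF : MeasurableSet {x : ℕ → S | x 0 ∉ F} :=
    measurable_pi_apply (X := fun _ : ℕ => S) 0 (.of_discrete (s := {s : S | s ∉ F}))
  let G : Set (ℕ → S) := {x | x 0 ∉ F} ∪ shf^[n + k] ⁻¹' {x | x 0 ∉ F}
  have hG : MeasurableSet G := hF.union ((hσ.iterate _).measurable hF)
  obtain ⟨htn, htn_eq⟩ := integrable_and_integral_birkhoffSum_const_add_indicator hσ hD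
    (-Real.log (1 - η)) (Real.log (Fintype.card ι / η)) n
  have hGE : Integrable (G.indicator fun _ => E) μ := (integrable_const _).indicator hG
  have hcost := (integrable_const ((n + k : ℕ) * B + A)).add htn
  refine (shannonEntropy_map_add_integral_le (measurable_itinerary hσ.measurable hP n) hq0 hq1 hint
    (hcost.add hGE) ?_).trans ?_
  · filter_upwards [hμ] with x hx
    have hword := neg_log_wordWeight_itinerary_le (τ := shf) h0 h1 hγP n x
    rw [Pi.add_apply, Pi.add_apply]
    by_cases hxG : x ∈ G
    · rw [Set.indicator_of_mem hxG]
      have hword0 := Real.log_nonpos (wordWeight_pos h0 h1 _ _).le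
        (wordWeight_le_one h0 h1 (itinerary shf γ n x) (itinerary shf P n x))
      linarith [H.add_le_of_le_add_mul (k := k) (B := B) hn hx (Real.log_natCast_nonneg _)
        (hqu (itinerary shf P n x))]
    · rw [Set.indicator_of_notMem hxG]
      simp only [G, Set.mem_union, Set.mem_preimage, Set.mem_ofPred_eq, not_or, not_not,
        iterate_shf_apply, zero_add] at hxG
      linarith [hqx x hx hxG.1 hxG.2 (itinerary shf P n x)]
  · rw [integral_add' hcost hGE, integral_add' (integrable_const _) htn, htn_eq,
      integral_indicator_const _ hG]
    simp only [integral_const, probReal_univ, smul_eq_mul, one_mul]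
    gcongr
    exact measureReal_union_preimage_iterate_le hσ hF (n + k)

lemma IsAlmostAdditiveBowen.exists_entropy_add_integral_le
    (H : IsAlmostAdditiveBowen T (fun n x => Real.log (f n x)) C K)
    (hpos : ∀ n, 0 < n → ∀ x ∈ shiftSpace T, 0 < f n x)
    (hirr : ∀ a b : S, ∃ n, 0 < n ∧ ∃ x ∈ shiftSpace T, x 0 = a ∧ x n = b)
    (hB : ∀ᶠ n in atTop, ZFun T f n a ≤ ENNReal.ofReal (Real.exp (n * B)))
    (hσ : MeasurePreserving shf μ μ) (hμ : ∀ᵐ x ∂μ, x ∈ shiftSpace T) (hP : Measurable P)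
    {δ : ℝ} (hδ : 0 < δ) :
    ∃ (A : ℝ) (k : ℕ), ∀ᶠ n in atTop, Integrable (fun x => Real.log (f (n + k) x)) μ →
      shannonEntropy (μ.map (itinerary shf P n)) + ∫ x, Real.log (f (n + k) x) ∂μ ≤
        (n + k : ℕ) * (B + δ) + A := by
  have hι : Nonempty ι := hμ.exists.nonempty.map P
  have hcard : (0 : ℝ) < Fintype.card ι := by exact_mod_cast Fintype.card_pos
  have hC := H.const_nonneg hμ.exists.choose_spec
  set E := |K| + C + Real.log (Fintype.card ι) + |B|
  have hE0 : 0 ≤ E := by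
    have := Real.log_natCast_nonneg (Fintype.card ι)
    positivity
  obtain ⟨η, h0, h1, hη⟩ := exists_noise_cost_le hcard (half_pos hδ)
  obtain ⟨γ, J, D, hγ, hD, hDη, hγP⟩ := exists_dependsOn_eqOn_compl (μ := μ) hP h0
  obtain ⟨k, hJ⟩ := J.exists_nat_subset_range
  obtain ⟨F, hF⟩ := exists_finset_measureReal_notMem_le (μ := μ)
    (measurable_pi_apply (X := fun _ : ℕ => S) 0) (ε := δ / (4 * (E + 1))) (by positivity)
  obtain ⟨A, hA⟩ := H.exists_entropy_add_integral_le_of_eqOn hpos hirr hB hσ hμ hP h0 h1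
    (hγ.mono fun i hi => Finset.mem_range.1 (hJ hi)) hD hγP F
  refine ⟨A, k, hA.mono fun n hn hint => (hn hint).trans ?_⟩
  have hnoise : -Real.log (1 - η) + μ.real D * Real.log (Fintype.card ι / η) ≤ δ / 2 := by
    have := log_card_div_nonneg (ι := ι) h0 h1.le
    exact hη.trans' (by gcongr)
  have htail : 2 * μ.real {x | x 0 ∉ F} * E ≤ δ / 2 := by
    have hratio : E / (E + 1) ≤ 1 := (div_le_one (by positivity)).2 (by linarith)
    calc 2 * μ.real {x | x 0 ∉ F} * E ≤ 2 * (δ / (4 * (E + 1))) * E := by gcongr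
      _ = δ / 2 * (E / (E + 1)) := by field_simp; ring
      _ ≤ δ / 2 := mul_le_of_le_one_right (by positivity) hratio
  have hn_le : (n : ℝ) ≤ (n + k : ℕ) := by exact_mod_cast Nat.le_add_right n k
  calc _ ≤ (n + k : ℕ) * B + A + n * (δ / 2) + (n + k : ℕ) * (δ / 2) := by
        rw [mul_left_comm]
        gcongr
    _ ≤ (n + k : ℕ) * B + A + (n + k : ℕ) * (δ / 2) + (n + k : ℕ) * (δ / 2) := by gcongr
    _ = (n + k : ℕ) * (B + δ) + A := by ring

end UpperBound

section VariationalPrinciple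

lemma eventually_ZFun_le_of_press_lt {S : Type*} {T : S → S → Prop} {f : ℕ → (ℕ → S) → ℝ} {a : S}
    {B : ℝ} (hB : press T f a < B) :
    ∀ᶠ n in atTop, ZFun T f n a ≤ ENNReal.ofReal (Real.exp (n * B)) := by
  filter_upwards [eventually_lt_of_limsup_lt hB, eventually_gt_atTop 0] with n hn hn0
  rw [← ENNReal.log_le_log_iff, ENNReal.log_ofReal_of_pos (Real.exp_pos _), Real.log_exp]
  exact (ereal_div_natCast_le_coe_iff hn0).1 hn.le

variable {S : Type*} [Countable S] [MeasurableSpace S] [MeasurableSingletonClass S]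
  {T : S → S → Prop} {f : ℕ → (ℕ → S) → ℝ} {C K : ℝ} {a : S} {μ : Measure (ℕ → S)}
  [IsProbabilityMeasure μ]

lemma IsAlmostAdditiveBowen.lyap_le_sub_partitionEntropy
    (H : IsAlmostAdditiveBowen T (fun n x => Real.log (f n x)) C K)
    (hmeas : ∀ n, Measurable (f n)) (hpos : ∀ n, 0 < n → ∀ x ∈ shiftSpace T, 0 < f n x)
    (hirr : ∀ a b : S, ∃ n, 0 < n ∧ ∃ x ∈ shiftSpace T, x 0 = a ∧ x n = b)
    (hσ : MeasurePreserving shf μ μ) (hμ : ∀ᵐ x ∂μ, x ∈ shiftSpace T) {B : ℝ}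
    (hB : press T f a < B) {ι : Type*} [Fintype ι] [MeasurableSpace ι]
    [MeasurableSingletonClass ι] {P : (ℕ → S) → ι} (hP : Measurable P) :
    lyap μ f ≤ (B - partitionEntropy μ shf P : ℝ) := by
  refine EReal.le_of_forall_lt_iff_le.1 fun r hr => ?_
  have hδ : 0 < r - (B - partitionEntropy μ shf P) := sub_pos.2 (EReal.coe_lt_coe_iff.1 hr)
  obtain ⟨A, k, hA⟩ := H.exists_entropy_add_integral_le hpos hirr
    (eventually_ZFun_le_of_press_lt hB) hσ hμ hP hδ
  refine lyap_le_of_eventually_integral_le (c := A + k * partitionEntropy μ shf P) hmeas ?_ ?_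
  · filter_upwards [eventually_gt_atTop 0] with n hn
    exact ⟨_, hμ.mono fun x hx => H.le_mul hn hx⟩
  · rw [← map_add_atTop_eq_nat k, eventually_map]
    filter_upwards [hA, eventually_gt_atTop 0] with n hn hn0 hint
    have hent := partitionEntropy_le_div (μ := μ) hσ.measurable hP hn0
    rw [le_div_iff₀' (by positivity)] at hent
    have hle := hn hint
    push_cast at hle ⊢
    linarith

lemma IsAlmostAdditiveBowen.hKS_add_lyap_le_press
    (H : IsAlmostAdditiveBowen T (fun n x => Real.log (f n x)) C K)
    (hmeas : ∀ n, Measurable (f n)) (hpos : ∀ n, 0 < n → ∀ x ∈ shiftSpace T, 0 < f n x)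
    (hirr : ∀ a b : S, ∃ n, 0 < n ∧ ∃ x ∈ shiftSpace T, x 0 = a ∧ x n = b)
    (hσ : MeasurePreserving shf μ μ) (hμ : ∀ᵐ x ∂μ, x ∈ shiftSpace T) (hbot : lyap μ f ≠ ⊥) :
    hKS μ + lyap μ f ≤ press T f a := by
  refine EReal.le_of_forall_lt_iff_le.1 fun B hB => ?_
  have hlyap {ι : Type} [Fintype ι] [MeasurableSpace ι] [MeasurableSingletonClass ι]
      {P : (ℕ → S) → ι} (hP : Measurable P) : lyap μ f ≤ (B - partitionEntropy μ shf P : ℝ) :=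
    H.lyap_le_sub_partitionEntropy hmeas hpos hirr hσ hμ hB hP
  have hunit := hlyap (measurable_const (a := ()))
  lift lyap μ f to ℝ using ⟨(hunit.trans_lt (EReal.coe_lt_top _)).ne, hbot⟩ with r
  have hr : 0 ≤ B - r := by
    have := partitionEntropy_nonneg (μ := μ) measurable_shf (measurable_const (a := ()))
    linarith [EReal.coe_le_coe_iff.1 hunit]
  have hKS_le : hKS μ ≤ ENNReal.ofReal (B - r) := by
    refine le_of_forall_lt fun b hb => ?_
    obtain ⟨R, P, hP, hbP⟩ := exists_lt_partitionEntropy_of_lt_hKS hb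
    refine hbP.trans_le (ENNReal.ofReal_le_ofReal ?_)
    linarith [EReal.coe_le_coe_iff.1 (hlyap hP)]
  calc (hKS μ : EReal) + r ≤ ((B - r : ℝ) : EReal) + r := by
        gcongr
        refine (EReal.coe_ennreal_le_coe_ennreal_iff.2 hKS_le).trans_eq ?_
        rw [EReal.coe_ennreal_ofReal, max_eq_left hr]
    _ = B := by rw [← EReal.coe_add, sub_add_cancel]

end VariationalPrinciple

theorem variational_principle_general {S : Type*} [Countable S] [MeasurableSpace S]
    [MeasurableSingletonClass S] {T : S → S → Prop}
    (hirr : ∀ a b : S, ∃ n, 0 < n ∧ ∃ x ∈ shiftSpace T, x 0 = a ∧ x n = b)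
    {f : ℕ → (ℕ → S) → ℝ} (hmeas : ∀ n, Measurable (f n))
    (hpos : ∀ n, 0 < n → ∀ x ∈ shiftSpace T, 0 < f n x) {C K : ℝ}
    (H : IsAlmostAdditiveBowen T (fun n x => Real.log (f n x)) C K) (a : S) :
    press T f a =
      ⨆ (μ : Measure (ℕ → S)) (_ : IsProbabilityMeasure μ ∧
          (∀ s : Set (ℕ → S), MeasurableSet s → μ (shf ⁻¹' s) = μ s) ∧
          μ (shiftSpace T) = 1 ∧ lyap μ f ≠ ⊥),
        ((hKS μ : EReal) + lyap μ f) := by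
  refine le_antisymm (EReal.ge_of_forall_gt_iff_ge.1 fun B hB => ?_)
    (iSup₂_le fun μ ⟨hμ, hinv, hsupp, hbot⟩ => ?_)
  · obtain ⟨μ, hμ, hσ, hsupp, hbot, hle⟩ := exists_le_hKS_add_lyap_of_lt_press H hmeas hpos hB
    exact hle.trans (le_iSup₂_of_le μ ⟨hμ, fun s hs => hσ.measure_preimage hs.nullMeasurableSet,
      (mem_ae_iff_prob_eq_one (measurableSet_shiftSpace T)).1 hsupp, hbot⟩ le_rfl)
  · have hσ : MeasurePreserving shf μ μ := ⟨measurable_shf, Measure.ext fun s hs => by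
      rw [Measure.map_apply measurable_shf hs, hinv s hs]⟩
    exact H.hKS_add_lyap_le_press hmeas hpos hirr hσ
      ((mem_ae_iff_prob_eq_one (measurableSet_shiftSpace T)).2 hsupp) hbot

/-- The variational principle for the almost-additive Gurevich pressure. -/
theorem variational_principle {S : Type*} [Countable S] [MeasurableSpace S]
    [MeasurableSingletonClass S] (T : S → S → Prop)
    (hmix : ∀ a b : S, ∃ N : ℕ, ∀ n > N, ∃ x ∈ shiftSpace T, x 0 = a ∧ x n = b)
    (f : ℕ → (ℕ → S) → ℝ) (hmeas : ∀ n, Measurable (f n)) (M C : ℝ) (hM : 0 < M) (hC : 0 ≤ C)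
    (hpos : ∀ n, 0 < n → ∀ x ∈ shiftSpace T, 0 < f n x)
    (hBowen : ∀ n, 0 < n → ∀ x ∈ shiftSpace T, ∀ y ∈ shiftSpace T,
      (∀ i < n, x i = y i) → f n x ≤ M * f n y)
    (hAA : ∀ n m, 0 < n → 0 < m → ∀ x ∈ shiftSpace T,
      f n x * f m (shf^[n] x) * Real.exp (-C) ≤ f (n + m) x ∧
        f (n + m) x ≤ Real.exp C * (f n x * f m (shf^[n] x)))
    (hsup : ∃ K : ℝ, ∀ x ∈ shiftSpace T, f 1 x ≤ K) :
    ∀ a : S, press T f a =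
      ⨆ (μ : Measure (ℕ → S)) (_ : IsProbabilityMeasure μ ∧
          (∀ s : Set (ℕ → S), MeasurableSet s → μ (shf ⁻¹' s) = μ s) ∧
          μ (shiftSpace T) = 1 ∧ lyap μ f ≠ ⊥),
        ((hKS μ : EReal) + lyap μ f) := by
  obtain ⟨K, hK⟩ := hsup
  have hirr (a b : S) : ∃ n, 0 < n ∧ ∃ x ∈ shiftSpace T, x 0 = a ∧ x n = b :=
    (hmix a b).elim fun N hN => ⟨N + 1, N.succ_pos, hN _ N.lt_succ_self⟩
  exact variational_principle_general hirr hmeas hpos (.of_exp hM hpos hBowen hAA hK)
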